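/- Let 𝔤 be a finite-dimensional complex simple Lie algebra of type E6 and let (e,h,f) be an sl2-triple in 𝔤 such that e is a distinguished nilpotent element with dim 𝔤^e = 8 (the subregular orbit of E6). Then the centre 𝔷(𝔤^e) of 𝔤^e has dimension 5, the eigenvalues of the restriction of ad h to 𝔷(𝔤^e) are 2, 8, 10, 14, 16, and e satisfies property (P). -/

import Mathlib

open scoped ComplexOrder

/-- The centralizer `𝔤^e = {x ∈ 𝔤 : ⁅x, e⁆ = 0}` of an element `e`, as a Lie subalgebra. -/
def centralizer (L : Type*) [LieRing L] [LieAlgebra ℂ L] (e : L) : LieSubalgebra ℂ L where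
  carrier := {x : L | ⁅x, e⁆ = 0}
  add_mem' := fun {a b} ha hb => by
    simp only [Set.mem_setOf_eq] at *
    rw [add_lie, ha, hb, add_zero]
  zero_mem' := by simp
  smul_mem' := fun c a ha => by
    simp only [Set.mem_setOf_eq] at *
    rw [smul_lie, ha, smul_zero]
  lie_mem' := fun {a b} ha hb => by
    simp only [Set.mem_setOf_eq] at *
    simp [lie_lie, ha, hb]

/-- Membership in the centre `𝔷(𝔤^e)` of the centralizer of `e`:
`v` centralizes `e` and commutes with every element of `𝔤^e`. -/
def InCenterOfCentralizer (L : Type*) [LieRing L] [LieAlgebra ℂ L] (e v : L) : Prop :=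
  ⁅v, e⁆ = 0 ∧ ∀ y : L, ⁅y, e⁆ = 0 → ⁅v, y⁆ = 0

/-- The centre `𝔷(𝔤^e)` of the centralizer of `e`, as a subspace of `L`. -/
def zCenter (L : Type*) [LieRing L] [LieAlgebra ℂ L] (e : L) : Submodule ℂ L where
  carrier := {v : L | ⁅v, e⁆ = 0 ∧ ∀ y : L, ⁅y, e⁆ = 0 → ⁅v, y⁆ = 0}
  add_mem' := fun {a b} ha hb => ⟨by rw [add_lie, ha.1, hb.1, add_zero],
    fun y hy => by rw [add_lie, ha.2 y hy, hb.2 y hy, add_zero]⟩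
  zero_mem' := ⟨zero_lie e, fun y _ => zero_lie y⟩
  smul_mem' := fun c a ha => ⟨by rw [smul_lie, ha.1, smul_zero],
    fun y hy => by rw [smul_lie, ha.2 y hy, smul_zero]⟩

/-- Property (P) for an `sl₂`-triple `(e, h, f)`: for every nonzero `v ∈ 𝔷(𝔤^e)`, the
eigenspace `𝔷_max` of the restriction of `ad h` to `𝔷(𝔤^e)` for its largest eigenvalue is
contained in `[[f, 𝔤^e], v] = {⁅⁅f, x⁆, v⁆ : x ∈ 𝔤^e}`. -/
def PropertyP (L : Type*) [LieRing L] [LieAlgebra ℂ L] (e h f : L) : Prop :=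
  ∀ m : ℂ,
    (∃ z : L, z ≠ 0 ∧ InCenterOfCentralizer L e z ∧ ⁅h, z⁆ = m • z) →
    (∀ m' : ℂ, (∃ z : L, z ≠ 0 ∧ InCenterOfCentralizer L e z ∧ ⁅h, z⁆ = m' • z) → m' ≤ m) →
    ∀ v : L, InCenterOfCentralizer L e v → v ≠ 0 →
      ∀ z : L, InCenterOfCentralizer L e z → ⁅h, z⁆ = m • z →
        ∃ x : L, ⁅x, e⁆ = 0 ∧ ⁅⁅f, x⁆, v⁆ = z

/-- The stabilizer `{x ∈ 𝔮 : ξ(⁅x, y⁆) = 0 for all y ∈ 𝔮}` of a linear functional `ξ`. -/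
def coadStab (Q : Type*) [LieRing Q] [LieAlgebra ℂ Q] (ξ : Module.Dual ℂ Q) : Submodule ℂ Q where
  carrier := {x : Q | ∀ y : Q, ξ ⁅x, y⁆ = 0}
  add_mem' := fun {a b} ha hb y => by rw [add_lie, map_add, ha y, hb y, add_zero]
  zero_mem' := fun y => by rw [zero_lie, map_zero]
  smul_mem' := fun c a ha y => by rw [smul_lie, map_smul, ha y, smul_zero]

/-- The index of a complex Lie algebra:
`ind 𝔮 = min_{ξ ∈ 𝔮*} dim {x ∈ 𝔮 : ξ(⁅x, y⁆) = 0 for all y ∈ 𝔮}`. -/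
noncomputable def lieIndex (Q : Type*) [LieRing Q] [LieAlgebra ℂ Q] : ℕ :=
  ⨅ ξ : Module.Dual ℂ Q, Module.finrank ℂ ↥(coadStab Q ξ)

/-- A nilpotent element `e` is distinguished if the only `x ∈ 𝔤^e` such that `ad x` is a
semisimple endomorphism of `𝔤` is `x = 0`. -/
def IsDistinguished (L : Type*) [LieRing L] [LieAlgebra ℂ L] (e : L) : Prop :=
  ∀ x : L, ⁅x, e⁆ = 0 → (LieAlgebra.ad ℂ L x).IsSemisimple → x = 0

/-!
The adjoint representation of `E₆` is made explicit through a Chevalley basis of `6 + 72` integer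
matrices acting on the 27-dimensional minuscule representation; the Serre presentation of `E₆` maps
isomorphically onto their span, by simplicity.

The semisimple element `h` of the triple lies in a Cartan subalgebra, and all of them are conjugate
to the standard one: an element that commutes with `h` and has the smallest possible generalized
null space is moved into the standard Cartan subalgebra by exponentials of root vectors. The Weyl
group makes `h` dominant. By `sl₂`-theory the eigenvalues of `ad h` are integers and `dim 𝔤^e` is
the number of roots and simple coroots of weight `0` plus the number of roots of weight `1`, so
`dim 𝔤^e = 8` leaves the weighted Dynkin diagrams with one label `0` and all other labels `2`.

Conjugating by the exponentials of the root vectors of the node labelled `0`, a distinguished `e`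
is brought to a normal form: any other node, or any degenerate coefficient, produces a semisimple
element of the Cartan subalgebra that commutes with `e`. The maximal torus then rescales the normal
form to one explicit vector, for which the centralizer, its centre and the brackets occurring in
property (P) are finite tables.
-/

/-! ### Sparse integer matrices -/

/-- A square integer matrix written as a list of entries `(row, column, value)`; entries at the
same position are added up. This representation makes matrix identities decidable in the kernel. -/
abbrev SparseMatrix (ι : Type*) := List (ι × ι × ℤ)

namespace SparseMatrix

variable {ι : Type*} [DecidableEq ι]

/-- The entry at a given position. Nested tests are cheaper in the kernel than a conjunction. -/
def entry (l : SparseMatrix ι) (i j : ι) : ℤ :=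
  l.foldr (fun t s => if t.1 = i then if t.2.1 = j then t.2.2 + s else s else s) 0

/-- The matrix product. -/
def mul (l m : SparseMatrix ι) : SparseMatrix ι :=
  l.flatMap fun t => m.filterMap fun u =>
    if t.2.1 = u.1 then some (t.1, u.2.1, t.2.2 * u.2.2) else none

/-- The multiple by an integer. -/
def smul {ι : Type*} (c : ℤ) (l : SparseMatrix ι) : SparseMatrix ι :=
  l.map fun t => (t.1, t.2.1, c * t.2.2)

/-- The transpose. -/
def transpose {ι : Type*} (l : SparseMatrix ι) : SparseMatrix ι :=
  l.map fun t => (t.2.1, t.1, t.2.2)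

/-- The commutator. -/
def bracket (l m : SparseMatrix ι) : SparseMatrix ι := l.mul m ++ smul (-1) (m.mul l)

/-- Equality of the represented matrices, tested at the finitely many positions that occur. -/
def Equiv (l m : SparseMatrix ι) : Prop :=
  ∀ t ∈ l ++ m, l.entry t.1 t.2.1 = m.entry t.1 t.2.1

instance (l m : SparseMatrix ι) : Decidable (l.Equiv m) :=
  inferInstanceAs (Decidable (∀ t ∈ l ++ m, _))

/-- The pairing `∑ i j, l i j * m i j`. -/
def pairing (l m : SparseMatrix ι) : ℤ := (l.map fun t => t.2.2 * m.entry t.1 t.2.1).sum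

/-- The represented matrix, with entries in an arbitrary ring. -/
def toMatrix (R : Type*) [Ring R] (l : SparseMatrix ι) : Matrix ι ι R :=
  (l.map fun t => Matrix.single t.1 t.2.1 (t.2.2 : R)).sum

/-- The linear functional `M ↦ ∑ i j, l i j * M i j` on matrices. -/
def pairingMatrix (R : Type*) [CommRing R] (l : SparseMatrix ι) : Matrix ι ι R →ₗ[R] R :=
  (l.map fun t => (t.2.2 : R) • Matrix.entryLinearMap R R t.1 t.2.1).sum

section Ring

variable {R : Type*} [Ring R]

lemma toMatrix_apply (l : SparseMatrix ι) (i j : ι) : toMatrix R l i j = (l.entry i j : R) := by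
  induction l with
  | nil => simp [toMatrix, entry]
  | cons t l ih =>
    rw [entry, List.foldr_cons, ← entry, toMatrix, List.map_cons, List.sum_cons, ← toMatrix,
      Matrix.add_apply, ih, Matrix.single_apply]
    split_ifs <;> simp_all

@[simp] lemma toMatrix_nil : toMatrix R ([] : SparseMatrix ι) = 0 := rfl

lemma toMatrix_cons (t : ι × ι × ℤ) (l : SparseMatrix ι) :
    toMatrix R (t :: l) = Matrix.single t.1 t.2.1 (t.2.2 : R) + toMatrix R l := by
  simp [toMatrix]

lemma toMatrix_append (l m : SparseMatrix ι) :
    toMatrix R (l ++ m) = toMatrix R l + toMatrix R m := by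
  simp [toMatrix]

lemma toMatrix_smul (c : ℤ) (l : SparseMatrix ι) : toMatrix R (smul c l) = c • toMatrix R l := by
  induction l with
  | nil => simp [smul]
  | cons t l ih =>
    rw [smul, List.map_cons, ← smul, toMatrix_cons, toMatrix_cons, ih, smul_add, Matrix.smul_single]
    simp

lemma toMatrix_transpose (l : SparseMatrix ι) :
    toMatrix R l.transpose = (toMatrix R l).transpose := by
  induction l with
  | nil => simp [transpose]
  | cons t l ih =>
    rw [transpose, List.map_cons, ← transpose, toMatrix_cons, toMatrix_cons, ih,
      Matrix.transpose_add, Matrix.transpose_single]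

lemma toMatrix_mul [Fintype ι] (l m : SparseMatrix ι) :
    toMatrix R (l.mul m) = toMatrix R l * toMatrix R m := by
  have single_mul (t : ι × ι × ℤ) : toMatrix R (m.filterMap fun u =>
      if t.2.1 = u.1 then some (t.1, u.2.1, t.2.2 * u.2.2) else none) =
        Matrix.single t.1 t.2.1 (t.2.2 : R) * toMatrix R m := by
    obtain ⟨i, j, c⟩ := t
    induction m with
    | nil => simp
    | cons u m ih =>
      obtain ⟨j', k, d⟩ := u
      by_cases h : j = j'
      · subst h
        simpa [toMatrix_cons, mul_add] using ih
      · simpa [toMatrix_cons, h, mul_add] using ih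
  induction l with
  | nil => simp [mul]
  | cons t l ih =>
    rw [mul, List.flatMap_cons, ← mul, toMatrix_append, single_mul, ih, toMatrix_cons, add_mul]

lemma toMatrix_eq_of_equiv {l m : SparseMatrix ι} (h : l.Equiv m) :
    toMatrix R l = toMatrix R m := by
  have entry_eq_zero {n : SparseMatrix ι} {i j : ι} (hn : ∀ t ∈ n, ¬(t.1 = i ∧ t.2.1 = j)) :
      n.entry i j = 0 := by
    induction n with
    | nil => rfl
    | cons t n ih =>
      rw [List.forall_mem_cons] at hn
      rw [entry, List.foldr_cons, ← entry, ih hn.2, ← ite_and, if_neg hn.1]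
  ext i j
  rw [toMatrix_apply, toMatrix_apply]
  congr 1
  by_cases hij : ∃ t ∈ l ++ m, t.1 = i ∧ t.2.1 = j
  · obtain ⟨t, ht, rfl, rfl⟩ := hij
    exact h t ht
  · push Not at hij
    rw [entry_eq_zero fun t ht => not_and.mpr (hij t (List.mem_append_left m ht)),
      entry_eq_zero fun t ht => not_and.mpr (hij t (List.mem_append_right l ht))]

end Ring

attribute [local instance] LieRing.ofAssociativeRing in
lemma toMatrix_bracket {R : Type*} [Ring R] [Fintype ι] (l m : SparseMatrix ι) :
    toMatrix R (l.bracket m) = ⁅toMatrix R l, toMatrix R m⁆ := by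
  rw [bracket, toMatrix_append, toMatrix_smul, toMatrix_mul, toMatrix_mul, Ring.lie_def]
  simp [sub_eq_add_neg]

lemma pairingMatrix_toMatrix {R : Type*} [CommRing R] (l m : SparseMatrix ι) :
    l.pairingMatrix R (m.toMatrix R) = (l.pairing m : R) := by
  induction l with
  | nil => simp [pairingMatrix, pairing]
  | cons t l ih =>
    simp only [pairingMatrix, pairing, List.map_cons, List.sum_cons, LinearMap.add_apply,
      LinearMap.smul_apply, Matrix.entryLinearMap_apply, toMatrix_apply, smul_eq_mul,
      Int.cast_add, Int.cast_mul] at ih ⊢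
    rw [ih]

end SparseMatrix

/-! ### Presentations and Lie subalgebras -/

section

variable {R : Type*} [CommRing R]

lemma lieSpan_toSubmodule_eq_of_lie_mem {A : Type*} [LieRing A] [LieAlgebra R A] {S : Set A}
    {W : Submodule R A} (subset : S ⊆ W) (le : W ≤ (LieSubalgebra.lieSpan R A S).toSubmodule)
    (lie_mem : ∀ x ∈ S, ∀ w ∈ W, ⁅x, w⁆ ∈ W) :
    (LieSubalgebra.lieSpan R A S).toSubmodule = W := by
  refine le_antisymm (fun x hx => ?_) le
  suffices x ∈ W ∧ ∀ w ∈ W, ⁅x, w⁆ ∈ W from this.1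
  induction hx using LieSubalgebra.lieSpan_induction with
  | mem x hx => exact ⟨subset hx, lie_mem x hx⟩
  | zero => simp
  | add x y _ _ hx hy =>
    exact ⟨add_mem hx.1 hy.1, fun w hw => by rw [add_lie]; exact add_mem (hx.2 w hw) (hy.2 w hw)⟩
  | smul c x _ hx =>
    exact ⟨W.smul_mem c hx.1, fun w hw => by rw [smul_lie]; exact W.smul_mem c (hx.2 w hw)⟩
  | lie x y _ _ hx hy =>
    refine ⟨hx.2 y hy.1, fun w hw => ?_⟩
    rw [lie_lie]
    exact sub_mem (hx.2 _ (hy.2 w hw)) (hy.2 _ (hx.2 w hw))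

lemma range_freeLieAlgebra_lift {X A : Type*} [LieRing A] [LieAlgebra R A] (f : X → A) :
    (FreeLieAlgebra.lift R f).range = LieSubalgebra.lieSpan R A (Set.range f) := by
  apply le_antisymm
  · let g : X → LieSubalgebra.lieSpan R A (Set.range f) :=
      fun x => ⟨f x, LieSubalgebra.subset_lieSpan ⟨x, rfl⟩⟩
    have incl_comp_lift : (LieSubalgebra.lieSpan R A (Set.range f)).incl.comp
        (FreeLieAlgebra.lift R g) = FreeLieAlgebra.lift R f := by
      ext x
      simp [g]
    rintro _ ⟨x, rfl⟩
    rw [← incl_comp_lift]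
    exact (FreeLieAlgebra.lift R g x).2
  · rw [LieSubalgebra.lieSpan_le]
    rintro _ ⟨x, rfl⟩
    exact ⟨FreeLieAlgebra.of R x, FreeLieAlgebra.lift_of_apply (R := R) f x⟩

lemma nonempty_equiv_range_of_isSimple {A L M : Type*} [LieRing A] [LieAlgebra R A] [LieRing L]
    [LieAlgebra R L] [LieAlgebra.IsSimple R L] [LieRing M] [LieAlgebra R M] {π : A →ₗ⁅R⁆ L}
    (hπ : Function.Surjective π) {φ : A →ₗ⁅R⁆ M} (hφ : φ ≠ 0) (hker : π.ker ≤ φ.ker) :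
    Nonempty (L ≃ₗ⁅R⁆ φ.range) := by
  have ker_eq : π.ker = φ.ker := by
    refine le_antisymm hker ?_
    rcases LieAlgebra.IsSimple.eq_bot_or_eq_top (φ.ker.map π) with h | h
    · exact LieIdeal.map_eq_bot_iff.mp h
    · refine absurd ?_ hφ
      ext x
      obtain ⟨⟨y, hy⟩, hyx⟩ := LieIdeal.mem_map_of_surjective hπ (h ▸ LieSubmodule.mem_top (π x))
      have hxy : x - y ∈ φ.ker := hker <| by
        rw [LieHom.mem_ker, map_sub, sub_eq_zero]
        exact hyx.symm
      rw [LieHom.mem_ker, map_sub, LieHom.mem_ker.mp hy, sub_zero] at hxy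
      exact hxy
  have range_eq : π.range = ⊤ := LieHom.range_eq_top π |>.mpr hπ
  exact ⟨((LieEquiv.ofEq _ _ (congrArg _ range_eq)).trans LieSubalgebra.topEquiv).symm.trans
    (π.quotKerEquivRange.symm.trans (ker_eq ▸ φ.quotKerEquivRange))⟩

end

section Serre

open CartanMatrix

variable {R B M N : Type*} [CommRing R] [DecidableEq B] [LieRing M] [LieAlgebra R M] [LieRing N]
  [LieAlgebra R N]

/-- The relations of the Serre presentation attached to the integer matrix `A`, for a family `g` of
elements of a Lie algebra indexed by the generators of that presentation. -/
structure SerreRelations (R : Type*) {B M : Type*} [CommRing R] [LieRing M] [LieAlgebra R M]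
    (A : Matrix B B ℤ) (g : Generators B → M) : Prop where
  lie_H_H : ∀ i j, ⁅g (.H i), g (.H j)⁆ = 0
  lie_E_F_self : ∀ i, ⁅g (.E i), g (.F i)⁆ = g (.H i)
  lie_E_F_of_ne : ∀ i j, i ≠ j → ⁅g (.E i), g (.F j)⁆ = 0
  lie_H_E : ∀ i j, ⁅g (.H i), g (.E j)⁆ = A i j • g (.E j)
  lie_H_F : ∀ i j, ⁅g (.H i), g (.F j)⁆ = -(A i j • g (.F j))
  ad_E_pow : ∀ i j, (LieAlgebra.ad R M (g (.E i)) ^ (-A i j).toNat) ⁅g (.E i), g (.E j)⁆ = 0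
  ad_F_pow : ∀ i j, (LieAlgebra.ad R M (g (.F i)) ^ (-A i j).toNat) ⁅g (.F i), g (.F j)⁆ = 0

lemma lieHom_ad_pow_apply (φ : M →ₗ⁅R⁆ N) (x y : M) (n : ℕ) :
    φ ((LieAlgebra.ad R M x ^ n) y) = (LieAlgebra.ad R N (φ x) ^ n) (φ y) := by
  induction n with
  | zero => simp
  | succ n ih => simp [pow_succ', ih]

lemma SerreRelations.toIdeal_le_ker_lift {A : Matrix B B ℤ} {g : Generators B → M}
    (hg : SerreRelations R A g) :
    Relations.toIdeal R A ≤ (FreeLieAlgebra.lift R g).ker := by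
  refine LieSubmodule.lieSpan_le.mpr ?_
  rintro x (((((⟨⟨i, j⟩, rfl⟩ | ⟨⟨i, j⟩, rfl⟩) | ⟨⟨i, j⟩, rfl⟩) | ⟨⟨i, j⟩, rfl⟩) |
    ⟨⟨i, j⟩, rfl⟩) | ⟨⟨i, j⟩, rfl⟩) <;>
    rw [SetLike.mem_coe, LieHom.mem_ker]
  · simp [Relations.HH, hg.lie_H_H]
  · by_cases h : i = j
    · simp [Relations.EF, h, hg.lie_E_F_self]
    · simp [Relations.EF, h, hg.lie_E_F_of_ne i j h]
  · simp [Relations.HE, hg.lie_H_E]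
  · simp [Relations.HF, hg.lie_H_F]
  · simp only [Relations.adE, Function.uncurry, Function.comp, lieHom_ad_pow_apply, LieHom.map_lie,
      FreeLieAlgebra.lift_of_apply, hg.ad_E_pow]
  · simp only [Relations.adF, Function.uncurry, Function.comp, lieHom_ad_pow_apply, LieHom.map_lie,
      FreeLieAlgebra.lift_of_apply, hg.ad_F_pow]

lemma SerreRelations.nonempty_equiv_lieSpan {L : Type*} [LieRing L] [LieAlgebra R L]
    [LieAlgebra.IsSimple R L] {A : Matrix B B ℤ} {g : Generators B → M} (hg : SerreRelations R A g)
    (hne : ∃ x, g x ≠ 0) (e : L ≃ₗ⁅R⁆ A.ToLieAlgebra R) :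
    Nonempty (L ≃ₗ⁅R⁆ LieSubalgebra.lieSpan R M (Set.range g)) := by
  let I := Relations.toIdeal R A
  let e' : (FreeLieAlgebra R (Generators B) ⧸ I) ≃ₗ⁅R⁆ L := e.symm
  let π : FreeLieAlgebra R (Generators B) →ₗ⁅R⁆ L :=
    e'.toLieHom.comp
      { toLinearMap := LieSubmodule.Quotient.mk' I
        map_lie' := LieSubmodule.Quotient.mk_bracket I _ _ }
  rw [← range_freeLieAlgebra_lift]
  refine nonempty_equiv_range_of_isSimple (π := π) ?_ ?_ ?_
  · exact e'.surjective.comp (LieSubmodule.Quotient.surjective_mk' I)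
  · obtain ⟨x, hx⟩ := hne
    intro h
    apply hx
    rw [← FreeLieAlgebra.lift_of_apply (R := R) g x, h, LieHom.zero_apply]
  · intro x hx
    refine hg.toIdeal_le_ker_lift ?_
    rw [← LieSubmodule.Quotient.mk_eq_zero]
    exact e'.injective ((LieHom.mem_ker.mp hx : π x = 0).trans (map_zero e').symm)

end Serre

namespace E6

/-! ### The Chevalley basis of `E₆` in the 27-dimensional representation -/

open SparseMatrix CartanMatrix

/-- The root vectors of the simple roots in the minuscule representation: the simple root `i` moves
the weight vector `c` to the weight vector `r` for each entry `(r, c, 1)`. -/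
def simpleMatrix : Fin 6 → SparseMatrix (Fin 27) := ![
  [(0, 1, 1), (10, 12, 1), (13, 15, 1), (16, 17, 1), (18, 19, 1), (20, 21, 1)],
  [(3, 4, 1), (5, 6, 1), (7, 9, 1), (18, 20, 1), (19, 21, 1), (22, 23, 1)],
  [(1, 2, 1), (8, 10, 1), (11, 13, 1), (14, 16, 1), (19, 22, 1), (21, 23, 1)],
  [(2, 3, 1), (6, 8, 1), (9, 11, 1), (16, 18, 1), (17, 19, 1), (23, 24, 1)],
  [(3, 5, 1), (4, 6, 1), (11, 14, 1), (13, 16, 1), (15, 17, 1), (24, 25, 1)],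
  [(5, 7, 1), (6, 9, 1), (8, 11, 1), (10, 13, 1), (12, 15, 1), (25, 26, 1)]]

/-- The positive roots of `E₆`, as words in the simple roots whose iterated
brackets `[E i₁, [E i₂, [… , E iₕ]]]` are root vectors. The first six are the simple roots, the
last one is the highest root. -/
def positiveRoot : Fin 36 → List (Fin 6) := ![
  [0], [1], [2], [3], [4], [5], [2, 0], [3, 1], [3, 2], [4, 3], [5, 4], [3, 2, 0], [2, 3, 1],
  [4, 3, 1], [4, 3, 2], [5, 4, 3], [1, 3, 2, 0], [4, 3, 2, 0], [4, 2, 3, 1], [5, 4, 3, 1],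
  [5, 4, 3, 2], [4, 1, 3, 2, 0], [5, 4, 3, 2, 0], [3, 4, 2, 3, 1], [5, 4, 2, 3, 1],
  [3, 4, 1, 3, 2, 0], [5, 4, 1, 3, 2, 0], [5, 3, 4, 2, 3, 1], [2, 3, 4, 1, 3, 2, 0],
  [5, 3, 4, 1, 3, 2, 0], [4, 5, 3, 4, 2, 3, 1], [5, 2, 3, 4, 1, 3, 2, 0],
  [4, 5, 3, 4, 1, 3, 2, 0], [4, 5, 2, 3, 4, 1, 3, 2, 0], [3, 4, 5, 2, 3, 4, 1, 3, 2, 0],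
  [1, 3, 4, 5, 2, 3, 4, 1, 3, 2, 0]]

/-- The indices of the Chevalley basis: positive root vectors, negative root vectors, coroots. -/
inductive Index
  | pos (k : Fin 36)
  | neg (k : Fin 36)
  | coroot (i : Fin 6)
  deriving DecidableEq, Fintype

/-- The iterated bracket `[E i₁, [E i₂, [… , E iₕ]]]` of root vectors of simple roots. -/
def wordMatrix : List (Fin 6) → SparseMatrix (Fin 27)
  | [] => []
  | [i] => simpleMatrix i
  | i :: w => (simpleMatrix i).bracket (wordMatrix w)

/-- The Chevalley basis. -/
def basisMatrix : Index → SparseMatrix (Fin 27)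
  | .pos k => wordMatrix (positiveRoot k)
  | .neg k => (wordMatrix (positiveRoot k)).transpose
  | .coroot i => (simpleMatrix i).bracket (simpleMatrix i).transpose

/-- Matrices whose pairings with the Chevalley basis extract the coordinates. A root vector is
recognized by any one of its entries, all of which are `±1`. -/
def basisDual : Index → SparseMatrix (Fin 27)
  | .pos k => (basisMatrix (.pos k)).take 1
  | .neg k => (basisMatrix (.neg k)).take 1
  | .coroot i => (![[(0, 0, 1)], [(0, 0, 1), (20, 20, -1)], [(0, 0, 1), (1, 1, 1)],
      [(0, 0, 1), (1, 1, 1), (2, 2, 1)], [(25, 25, -1), (26, 26, -1)], [(26, 26, -1)]] :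
        Fin 6 → SparseMatrix (Fin 27)) i

/-- The coordinates of the roots in the simple roots; the coroots have weight zero. -/
def root : Index → Fin 6 → ℤ
  | .pos k, i => (positiveRoot k).count i
  | .neg k, i => -(positiveRoot k).count i
  | .coroot _, _ => 0

/-- The weight of a basis vector under the element of the Cartan subalgebra on which the simple
roots take the values `n`. -/
def weight {R : Type*} [CommRing R] (n : Fin 6 → R) (a : Index) : R :=
  n ⬝ᵥ fun i => (root a i : R)

/-- The involution exchanging a root with its negative. -/
def Index.flip : Index → Index
  | .pos k => .neg k
  | .neg k => .pos k
  | .coroot i => .coroot i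

/-- The simple roots among the positive roots. -/
def simpleRoot (i : Fin 6) : Fin 36 := i.castLE (by decide)

/-- The positions of the Chevalley generators in the Chevalley basis. -/
def generatorIndex : Generators (Fin 6) → Index
  | .H i => .coroot i
  | .E i => .pos (simpleRoot i)
  | .F i => .neg (simpleRoot i)

/-- The Chevalley generators as matrices. -/
def generatorMatrix : Generators (Fin 6) → SparseMatrix (Fin 27)
  | .H i => basisMatrix (.coroot i)
  | .E i => simpleMatrix i
  | .F i => (simpleMatrix i).transpose

lemma basisMatrix_generatorIndex (x : Generators (Fin 6)) :
    basisMatrix (generatorIndex x) = generatorMatrix x := by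
  have basisMatrix_pos : ∀ i, basisMatrix (.pos (simpleRoot i)) = simpleMatrix i := by
    decide +kernel
  have basisMatrix_neg : ∀ i, basisMatrix (.neg (simpleRoot i)) = (simpleMatrix i).transpose := by
    decide +kernel
  cases x with
  | H i => rfl
  | E i => exact basisMatrix_pos i
  | F i => exact basisMatrix_neg i

lemma root_simpleRoot (i j : Fin 6) : root (.pos (simpleRoot i)) j = if j = i then 1 else 0 := by
  revert i j
  decide +kernel

lemma root_flip (a : Index) : root a.flip = -root a := by
  cases a <;> ext i <;> simp [root, Index.flip]

lemma weight_simpleRoot {R : Type*} [CommRing R] (n : Fin 6 → R) (i : Fin 6) :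
    weight n (.pos (simpleRoot i)) = n i := by
  simp [weight, dotProduct, root_simpleRoot]

lemma weight_flip {R : Type*} [CommRing R] (n : Fin 6 → R) (a : Index) :
    weight n a.flip = -weight n a := by
  simp [weight, dotProduct, root_flip]

lemma pairing_basisDual (a b : Index) :
    (basisDual a).pairing (basisMatrix b) = if a = b then 1 else 0 := by
  revert a b
  decide +kernel

lemma bracket_coroot_equiv (j : Fin 6) (a : Index) :
    ((basisMatrix (.coroot j)).bracket (basisMatrix a)).Equiv
      (smul (weight (E₆ j) a) (basisMatrix a)) := by
  revert j a
  decide +kernel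

lemma bracket_simple_transpose_equiv {i j : Fin 6} (hij : i ≠ j) :
    ((simpleMatrix i).bracket (simpleMatrix j).transpose).Equiv [] := by
  revert i j
  decide +kernel

lemma iterate_bracket_simple_equiv (i j : Fin 6) :
    ((bracket (simpleMatrix i))^[(-E₆ i j).toNat]
      ((simpleMatrix i).bracket (simpleMatrix j))).Equiv [] := by
  revert i j
  decide +kernel

lemma iterate_bracket_simple_transpose_equiv (i j : Fin 6) :
    ((bracket (simpleMatrix i).transpose)^[(-E₆ i j).toNat]
      ((simpleMatrix i).transpose.bracket (simpleMatrix j).transpose)).Equiv [] := by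
  revert i j
  decide +kernel

lemma transpose_basisMatrix_equiv (a : Index) :
    (basisMatrix a).transpose.Equiv (basisMatrix a.flip) := by
  revert a
  decide +kernel

lemma exists_bracket_simple_equiv (i : Fin 6) (a : Index) :
    ∃ b, ((simpleMatrix i).bracket (basisMatrix a)).Equiv
      (smul ((basisDual b).pairing ((simpleMatrix i).bracket (basisMatrix a)))
        (basisMatrix b)) := by
  revert i a
  decide +kernel

lemma isUnit_det_E₆ : IsUnit ((E₆.map Int.cast : Matrix (Fin 6) (Fin 6) ℂ)).det := by
  have det_E₆ : E₆.det = 3 := by decide +kernel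
  have : ((E₆.map Int.cast : Matrix (Fin 6) (Fin 6) ℂ)).det = 3 := by
    rw [← Int.cast_det, det_E₆, Int.cast_ofNat]
  simp [this]

end E6

namespace E6

section Matrices

open SparseMatrix CartanMatrix
open scoped Matrix

attribute [local instance] LieRing.ofAssociativeRing

lemma linearIndependent_basisMatrix :
    LinearIndependent ℂ fun a => toMatrix ℂ (basisMatrix a) := by
  rw [Fintype.linearIndependent_iff]
  intro c hc a
  have pairing_eq : ∑ b, c b * ((basisDual a).pairing (basisMatrix b) : ℂ) = 0 := by
    simpa [pairingMatrix_toMatrix] using congrArg ((basisDual a).pairingMatrix ℂ) hc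
  simpa [pairing_basisDual] using pairing_eq

lemma lie_coroot_toMatrix (j : Fin 6) (a : Index) :
    ⁅toMatrix ℂ (basisMatrix (.coroot j)), toMatrix ℂ (basisMatrix a)⁆ =
      weight (E₆ j) a • toMatrix ℂ (basisMatrix a) := by
  rw [← toMatrix_bracket, toMatrix_eq_of_equiv (bracket_coroot_equiv j a), toMatrix_smul]

lemma iterate_bracket_toMatrix (l m : SparseMatrix (Fin 27)) (n : ℕ) :
    toMatrix ℂ ((bracket l)^[n] m) =
      (LieAlgebra.ad ℂ (Matrix (Fin 27) (Fin 27) ℂ) (toMatrix ℂ l) ^ n) (toMatrix ℂ m) := by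
  induction n with
  | zero => rfl
  | succ n ih =>
    rw [Function.iterate_succ_apply', toMatrix_bracket, ih, pow_succ', Module.End.mul_apply,
      LieAlgebra.ad_apply]

lemma serreRelations_generatorMatrix :
    SerreRelations ℂ E₆ fun x => toMatrix ℂ (generatorMatrix x) where
  lie_H_H i j := by
    rw [generatorMatrix, generatorMatrix, lie_coroot_toMatrix]
    simp [weight, root]
  lie_E_F_self i := (toMatrix_bracket _ _).symm
  lie_E_F_of_ne i j hij := by
    rw [generatorMatrix, generatorMatrix, ← toMatrix_bracket,
      toMatrix_eq_of_equiv (bracket_simple_transpose_equiv hij), toMatrix_nil]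
  lie_H_E i j := by
    rw [← basisMatrix_generatorIndex (.E j), generatorMatrix, lie_coroot_toMatrix,
      generatorIndex, weight_simpleRoot]
  lie_H_F i j := by
    have weight_eq : weight (E₆ i) (.neg (simpleRoot j)) = -E₆ i j :=
      (weight_flip _ (.pos (simpleRoot j))).trans (congrArg _ (weight_simpleRoot _ j))
    rw [← basisMatrix_generatorIndex (.F j), generatorMatrix, lie_coroot_toMatrix,
      generatorIndex, weight_eq, neg_smul]
  ad_E_pow i j := by
    rw [generatorMatrix, generatorMatrix, ← toMatrix_bracket, ← iterate_bracket_toMatrix,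
      toMatrix_eq_of_equiv (iterate_bracket_simple_equiv i j), toMatrix_nil]
  ad_F_pow i j := by
    rw [generatorMatrix, generatorMatrix, ← toMatrix_bracket, ← iterate_bracket_toMatrix,
      toMatrix_eq_of_equiv (iterate_bracket_simple_transpose_equiv i j), toMatrix_nil]

/-- The image of the minuscule representation of `E₆`, as a Lie algebra of matrices. -/
def chevalleyAlgebra : LieSubalgebra ℂ (Matrix (Fin 27) (Fin 27) ℂ) :=
  LieSubalgebra.lieSpan ℂ _ (Set.range fun x => toMatrix ℂ (generatorMatrix x))

lemma toMatrix_generatorMatrix_mem (x : Generators (Fin 6)) :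
    toMatrix ℂ (generatorMatrix x) ∈ chevalleyAlgebra :=
  LieSubalgebra.subset_lieSpan ⟨x, rfl⟩

lemma toMatrix_wordMatrix_mem (w : List (Fin 6)) :
    toMatrix ℂ (wordMatrix w) ∈ chevalleyAlgebra ∧
      toMatrix ℂ (wordMatrix w).transpose ∈ chevalleyAlgebra := by
  match w with
  | [] => simp [wordMatrix, transpose]
  | [i] => exact ⟨toMatrix_generatorMatrix_mem (.E i), toMatrix_generatorMatrix_mem (.F i)⟩
  | i :: j :: w =>
    obtain ⟨mem, transpose_mem⟩ := toMatrix_wordMatrix_mem (j :: w)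
    have lie_mem := chevalleyAlgebra.lie_mem (toMatrix_generatorMatrix_mem (.E i)) mem
    have lie_transpose_mem :=
      chevalleyAlgebra.lie_mem transpose_mem (toMatrix_generatorMatrix_mem (.F i))
    rw [wordMatrix.eq_3 _ _ (by simp), toMatrix_transpose, toMatrix_bracket]
    refine ⟨lie_mem, ?_⟩
    simpa [generatorMatrix, toMatrix_transpose, Ring.lie_def] using lie_transpose_mem

lemma toMatrix_basisMatrix_mem (a : Index) : toMatrix ℂ (basisMatrix a) ∈ chevalleyAlgebra :=
  match a with
  | .pos k => (toMatrix_wordMatrix_mem (positiveRoot k)).1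
  | .neg k => (toMatrix_wordMatrix_mem (positiveRoot k)).2
  | .coroot i => toMatrix_generatorMatrix_mem (.H i)

lemma exists_lie_simpleMatrix_eq (i : Fin 6) (a : Index) :
    ∃ (c : ℤ) (b : Index), ⁅toMatrix ℂ (simpleMatrix i), toMatrix ℂ (basisMatrix a)⁆ =
      c • toMatrix ℂ (basisMatrix b) := by
  obtain ⟨b, hb⟩ := exists_bracket_simple_equiv i a
  exact ⟨_, b, by rw [← toMatrix_bracket, toMatrix_eq_of_equiv hb, toMatrix_smul]⟩

lemma exists_lie_generatorMatrix_eq (x : Generators (Fin 6)) (a : Index) :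
    ∃ (c : ℤ) (b : Index), ⁅toMatrix ℂ (generatorMatrix x), toMatrix ℂ (basisMatrix a)⁆ =
      c • toMatrix ℂ (basisMatrix b) := by
  cases x with
  | H i => exact ⟨_, a, lie_coroot_toMatrix i a⟩
  | E i => exact exists_lie_simpleMatrix_eq i a
  | F i =>
    obtain ⟨c, b, hb⟩ := exists_lie_simpleMatrix_eq i a.flip
    have transpose_eq (a : Index) :
        (toMatrix ℂ (basisMatrix a)).transpose = toMatrix ℂ (basisMatrix a.flip) := by
      rw [← toMatrix_transpose, toMatrix_eq_of_equiv (transpose_basisMatrix_equiv a)]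
    have flip_flip : a.flip.flip = a := by cases a <;> rfl
    refine ⟨-c, b.flip, ?_⟩
    rw [generatorMatrix, toMatrix_transpose, neg_smul, ← transpose_eq b, ← Matrix.transpose_smul,
      ← hb, Ring.lie_def, Ring.lie_def, Matrix.transpose_sub, Matrix.transpose_mul,
      Matrix.transpose_mul, transpose_eq a.flip, flip_flip, neg_sub]

lemma toSubmodule_chevalleyAlgebra :
    chevalleyAlgebra.toSubmodule =
      Submodule.span ℂ (Set.range fun a => toMatrix ℂ (basisMatrix a)) := by
  refine lieSpan_toSubmodule_eq_of_lie_mem ?_ ?_ ?_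
  · rintro _ ⟨x, rfl⟩
    exact Submodule.subset_span
      ⟨generatorIndex x, congrArg (toMatrix ℂ) (basisMatrix_generatorIndex x)⟩
  · rw [Submodule.span_le]
    rintro _ ⟨a, rfl⟩
    exact toMatrix_basisMatrix_mem a
  · rintro _ ⟨x, rfl⟩ w hw
    induction hw using Submodule.span_induction with
    | mem w hw =>
      obtain ⟨a, rfl⟩ := hw
      obtain ⟨c, b, hb⟩ := exists_lie_generatorMatrix_eq x a
      rw [hb]
      exact zsmul_mem (Submodule.subset_span (Set.mem_range_self b)) c
    | zero => simp
    | add u v _ _ hu hv => rw [lie_add]; exact add_mem hu hv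
    | smul c u _ hu => rw [lie_smul]; exact Submodule.smul_mem _ c hu

/-- The Chevalley basis of the matrix Lie algebra. -/
noncomputable def chevalleyBasis : Module.Basis Index ℂ chevalleyAlgebra :=
  (Module.Basis.span linearIndependent_basisMatrix).map
    (LinearEquiv.ofEq _ _ toSubmodule_chevalleyAlgebra.symm)

lemma coe_chevalleyBasis (a : Index) :
    (chevalleyBasis a : Matrix (Fin 27) (Fin 27) ℂ) = toMatrix ℂ (basisMatrix a) := by
  rw [chevalleyBasis, Module.Basis.map_apply]
  exact congrArg Subtype.val (Module.Basis.span_apply linearIndependent_basisMatrix a)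

/-- A formal integral combination of elements of the Chevalley basis. -/
abbrev Combination := List (Index × ℤ)

/-- The matrix of an integral combination of basis elements. -/
def Combination.sparseMatrix (l : Combination) : SparseMatrix (Fin 27) :=
  l.flatMap fun t => smul t.2 (basisMatrix t.1)

/-- Equality of the bracket of two integral combinations with a third one. -/
def Combination.IsBracket (l m n : Combination) : Prop :=
  (l.sparseMatrix.bracket m.sparseMatrix).Equiv n.sparseMatrix

instance (l m n : Combination) : Decidable (l.IsBracket m n) :=
  inferInstanceAs (Decidable (SparseMatrix.Equiv _ _))

variable {L : Type*} [LieRing L] [LieAlgebra ℂ L]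

/-- A pinning of a Lie algebra of type `E₆`: an isomorphism with the standard model, or
equivalently the choice of Chevalley generators. -/
structure Pinning (L : Type*) [LieRing L] [LieAlgebra ℂ L] where
  /-- The isomorphism with the standard model. -/
  equiv : L ≃ₗ⁅ℂ⁆ chevalleyAlgebra

lemma nonempty_pinning [LieAlgebra.IsSimple ℂ L] (e : L ≃ₗ⁅ℂ⁆ LieAlgebra.e₆ ℂ) :
    Nonempty (Pinning L) := by
  have generator_ne_zero : ∃ x : Generators (Fin 6), toMatrix ℂ (generatorMatrix x) ≠ 0 :=
    ⟨.H 0, linearIndependent_basisMatrix.ne_zero (Index.coroot 0)⟩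
  exact (serreRelations_generatorMatrix.nonempty_equiv_lieSpan generator_ne_zero e).map .mk

namespace Pinning

variable (P : Pinning L)

/-- The Chevalley basis determined by a pinning. -/
noncomputable def basis : Module.Basis Index ℂ L :=
  chevalleyBasis.map P.equiv.symm.toLinearEquiv

/-- The pinning transported along an automorphism. -/
noncomputable def map (g : L ≃ₗ⁅ℂ⁆ L) : Pinning L := ⟨g.symm.trans P.equiv⟩

@[simp] lemma map_basis (g : L ≃ₗ⁅ℂ⁆ L) (a : Index) : (P.map g).basis a = g (P.basis a) := rfl

lemma eq_of_equiv_eq {x y : L} (h : (P.equiv x : Matrix (Fin 27) (Fin 27) ℂ) = P.equiv y) :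
    x = y :=
  P.equiv.injective (Subtype.ext h)

lemma equiv_basis (a : Index) :
    (P.equiv (P.basis a) : Matrix (Fin 27) (Fin 27) ℂ) = toMatrix ℂ (basisMatrix a) := by
  rw [basis, Module.Basis.map_apply, ← coe_chevalleyBasis]
  exact congrArg Subtype.val (P.equiv.apply_symm_apply _)

/-- The value of an integral combination of elements of the Chevalley basis. -/
noncomputable def vec (l : Combination) : L :=
  (l.map fun t => (t.2 : ℂ) • P.basis t.1).sum

@[simp] lemma vec_nil : P.vec [] = 0 := rfl

@[simp] lemma vec_cons (t : Index × ℤ) (l : Combination) :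
    P.vec (t :: l) = (t.2 : ℂ) • P.basis t.1 + P.vec l := List.sum_cons

lemma equiv_vec (l : Combination) :
    (P.equiv (P.vec l) : Matrix (Fin 27) (Fin 27) ℂ) = toMatrix ℂ l.sparseMatrix := by
  induction l with
  | nil => simp [Combination.sparseMatrix]
  | cons t l ih =>
    have sparseMatrix_cons : Combination.sparseMatrix (t :: l) =
      smul t.2 (basisMatrix t.1) ++ Combination.sparseMatrix l := List.flatMap_cons
    rw [vec_cons, map_add, map_smul, sparseMatrix_cons, toMatrix_append, toMatrix_smul, ← ih,
      ← equiv_basis P, ← Int.cast_smul_eq_zsmul ℂ]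
    rfl

lemma lie_vec {l m n : Combination} (h : l.IsBracket m n) : ⁅P.vec l, P.vec m⁆ = P.vec n := by
  apply P.eq_of_equiv_eq
  rw [LieEquiv.map_lie, LieSubalgebra.coe_bracket, equiv_vec, equiv_vec, equiv_vec,
    ← toMatrix_bracket, toMatrix_eq_of_equiv h]

lemma lie_basis {a b : Index} {n : Combination} (h : Combination.IsBracket [(a, 1)] [(b, 1)] n) :
    ⁅P.basis a, P.basis b⁆ = P.vec n := by
  simpa using P.lie_vec h

lemma lie_coroot (j : Fin 6) (a : Index) :
    ⁅P.basis (.coroot j), P.basis a⁆ = weight (fun i => (E₆ j i : ℂ)) a • P.basis a := by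
  have cast_weight : weight (fun i => (E₆ j i : ℂ)) a = (weight (E₆ j) a : ℤ) := by
    simp [weight, dotProduct]
  apply P.eq_of_equiv_eq
  rw [LieEquiv.map_lie, LieSubalgebra.coe_bracket, equiv_basis, equiv_basis, map_smul,
    SetLike.val_smul, equiv_basis, lie_coroot_toMatrix, cast_weight, Int.cast_smul_eq_zsmul]

/-- The element of the standard Cartan subalgebra with given values on the simple roots. -/
noncomputable def tor (n : Fin 6 → ℂ) : L :=
  ∑ j, (n ᵥ* (E₆.map Int.cast : Matrix (Fin 6) (Fin 6) ℂ)⁻¹) j • P.basis (.coroot j)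

lemma lie_tor (n : Fin 6 → ℂ) (a : Index) : ⁅P.tor n, P.basis a⁆ = weight n a • P.basis a := by
  have weight_eq (j : Fin 6) : weight (fun i => (E₆ j i : ℂ)) a =
      ((E₆.map Int.cast : Matrix (Fin 6) (Fin 6) ℂ) *ᵥ fun i => (root a i : ℂ)) j := rfl
  simp_rw [tor, sum_lie, smul_lie, lie_coroot, smul_smul, ← Finset.sum_smul, weight_eq]
  congr 1
  change _ ⬝ᵥ _ = _
  rw [Matrix.dotProduct_mulVec, Matrix.vecMul_vecMul, Matrix.nonsing_inv_mul _ isUnit_det_E₆,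
    Matrix.vecMul_one, weight]

lemma tor_vecMul (c : Fin 6 → ℂ) :
    P.tor (c ᵥ* E₆.map Int.cast) = ∑ j, c j • P.basis (.coroot j) := by
  rw [tor, Matrix.vecMul_vecMul, Matrix.mul_nonsing_inv _ isUnit_det_E₆, Matrix.vecMul_one]

lemma tor_cartan (j : Fin 6) : P.tor (fun i => E₆ j i) = P.basis (.coroot j) := by
  have row_eq : (fun i => (E₆ j i : ℂ)) = Pi.single j 1 ᵥ* E₆.map Int.cast := by
    ext i
    simp
  rw [row_eq, tor_vecMul]
  simp [Pi.single_apply]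

lemma tor_add (m n : Fin 6 → ℂ) : P.tor (m + n) = P.tor m + P.tor n := by
  simp [tor, Matrix.add_vecMul, add_smul, Finset.sum_add_distrib]

lemma tor_smul (c : ℂ) (n : Fin 6 → ℂ) : P.tor (c • n) = c • P.tor n := by
  simp [tor, Matrix.smul_vecMul, Finset.smul_sum, smul_smul]

@[simp] lemma map_tor (g : L ≃ₗ⁅ℂ⁆ L) (n : Fin 6 → ℂ) : (P.map g).tor n = g (P.tor n) := by
  simp [tor]

end Pinning

end Matrices

end E6

/-! ### Exponentials of derivations -/

section ExpOperator

open Filter Topology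

variable {𝕜 V : Type*} [RCLike 𝕜] [NormedAddCommGroup V] [NormedSpace 𝕜 V] [CompleteSpace V]

lemma exp_neg_apply_exp_apply (D : V →L[𝕜] V) (x : V) :
    NormedSpace.exp (-D) (NormedSpace.exp D x) = x := by
  let _ : NormedAlgebra ℚ (V →L[𝕜] V) := NormedAlgebra.restrictScalars ℚ 𝕜 _
  rw [← mul_apply_eq_comp, ← NormedSpace.exp_add_of_commute (Commute.refl D).neg_left]
  simp

lemma exp_apply_eq_of_hasDerivAt {D : V →L[𝕜] V} {γ : 𝕜 → V}
    (hγ : ∀ t, HasDerivAt γ (D (γ t)) t) : NormedSpace.exp D (γ 0) = γ 1 := by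
  have hasDerivAt_zero (t : 𝕜) :
      HasDerivAt (fun t : 𝕜 => NormedSpace.exp (t • (-D)) (γ t)) 0 t := by
    refine ((hasDerivAt_exp_smul_const (𝕂 := 𝕜) (-D) t).clm_apply (hγ t)).congr_deriv ?_
    simp
  have pullback_eq := is_const_of_deriv_eq_zero (fun t => (hasDerivAt_zero t).differentiableAt)
    (fun t => (hasDerivAt_zero t).deriv) 1 0
  simp only [one_smul, zero_smul, NormedSpace.exp_zero, one_apply_eq_self] at pullback_eq
  rw [← pullback_eq]
  simpa using exp_neg_apply_exp_apply (-D) (γ 1)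

lemma hasDerivAt_exp_smul_apply (D : V →L[𝕜] V) (x : V) (t : 𝕜) :
    HasDerivAt (fun t : 𝕜 => NormedSpace.exp (t • D) x) (D (NormedSpace.exp (t • D) x)) t := by
  refine ((hasDerivAt_exp_smul_const' (𝕂 := 𝕜) D t).clm_apply
    (hasDerivAt_const t x)).congr_deriv ?_
  simp

lemma exp_apply_bilin {D : V →L[𝕜] V} {B : V →L[𝕜] V →L[𝕜] V}
    (hD : ∀ x y, D (B x y) = B (D x) y + B x (D y)) (x y : V) :
    NormedSpace.exp D (B x y) = B (NormedSpace.exp D x) (NormedSpace.exp D y) := by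
  let γ : 𝕜 → V := fun t => B (NormedSpace.exp (t • D) x) (NormedSpace.exp (t • D) y)
  have hγ (t : 𝕜) : HasDerivAt γ (D (γ t)) t := by
    rw [hD]
    exact (B.hasFDerivAt.comp_hasDerivAt t (hasDerivAt_exp_smul_apply D x t)).clm_apply
      (hasDerivAt_exp_smul_apply D y t)
  simpa [γ] using exp_apply_eq_of_hasDerivAt hγ

lemma hasStrictFDerivAt_exp_apply_add (T : V →L[𝕜] V →L[𝕜] V) (C : Submodule 𝕜 V) (x : V) :
    HasStrictFDerivAt (fun p : V × C => NormedSpace.exp (T p.1) (x + p.2))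
      ((T.flip x).comp (ContinuousLinearMap.fst 𝕜 V C) +
        C.subtypeL.comp (ContinuousLinearMap.snd 𝕜 V C)) 0 := by
  have operator : HasStrictFDerivAt (fun p : V × C => NormedSpace.exp (T p.1))
      ((1 : (V →L[𝕜] V) →L[𝕜] (V →L[𝕜] V)).comp
        (T.comp (ContinuousLinearMap.fst 𝕜 V C))) 0 := by
    refine HasStrictFDerivAt.comp (g := NormedSpace.exp) (f := fun p : V × C => T p.1) 0 ?_
      (T.comp (ContinuousLinearMap.fst 𝕜 V C)).hasStrictFDerivAt
    simpa using hasStrictFDerivAt_exp_zero (𝕂 := 𝕜) (𝔸 := V →L[𝕜] V)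
  have vector : HasStrictFDerivAt (fun p : V × C => x + (p.2 : V))
      (C.subtypeL.comp (ContinuousLinearMap.snd 𝕜 V C)) 0 :=
    (C.subtypeL.comp (ContinuousLinearMap.snd 𝕜 V C)).hasStrictFDerivAt.const_add x
  refine (operator.clm_apply vector).congr_fderiv ?_
  ext p <;> simp

lemma eventually_exists_exp_apply_mem [FiniteDimensional 𝕜 V] (T : V →L[𝕜] V →L[𝕜] V)
    {C : Submodule 𝕜 V} {x : V} (hx : x ∈ C)
    (hC : LinearMap.range (T.flip x).toLinearMap ⊔ C = ⊤) :
    ∀ᶠ y in 𝓝 x, ∃ u : V, NormedSpace.exp (T u) y ∈ C := by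
  let _ : FiniteDimensional 𝕜 C := inferInstance
  let _ : CompleteSpace C := FiniteDimensional.complete 𝕜 C
  have surjective : LinearMap.range ((T.flip x).comp (ContinuousLinearMap.fst 𝕜 V C) +
      C.subtypeL.comp (ContinuousLinearMap.snd 𝕜 V C)).toLinearMap = ⊤ := by
    rw [eq_top_iff, ← hC]
    refine sup_le ?_ ?_
    · rintro _ ⟨y, rfl⟩
      exact ⟨(y, 0), by simp⟩
    · intro y hy
      exact ⟨(0, ⟨y, hy⟩), by simp⟩
  have map_nhds := (hasStrictFDerivAt_exp_apply_add T C x).map_nhds_eq_of_surj surjective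
  have range_mem_nhds :
      Set.range (fun p : V × C => NormedSpace.exp (T p.1) (x + (p.2 : V))) ∈ 𝓝 x := by
    convert range_mem_map using 1
    rw [map_nhds]
    simp
  filter_upwards [range_mem_nhds]
  rintro _ ⟨p, rfl⟩
  refine ⟨-p.1, ?_⟩
  rw [map_neg, exp_neg_apply_exp_apply]
  exact add_mem hx p.2.2

end ExpOperator

section ExpAd

open Filter Topology LieAlgebra

attribute [local instance] LieRing.ofAssociativeRing

variable {L : Type*} [LieRing L] [LieAlgebra ℂ L] [FiniteDimensional ℂ L]

variable (L) in
/-- Coordinates on a finite-dimensional complex Lie algebra. They provide the norm used to define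
exponentials. -/
noncomputable def lieCoords : L ≃ₗ[ℂ] (Fin (Module.finrank ℂ L) → ℂ) :=
  (Module.finBasis ℂ L).equivFun

variable (L) in
/-- The Lie bracket in coordinates. -/
noncomputable def lieCoordsBracket : (Fin (Module.finrank ℂ L) → ℂ) →L[ℂ]
    (Fin (Module.finrank ℂ L) → ℂ) →L[ℂ] (Fin (Module.finrank ℂ L) → ℂ) :=
  LinearMap.toContinuousLinearMap
    ((LinearMap.toContinuousLinearMap : _ ≃ₗ[ℂ] _).toLinearMap ∘ₗ
      ((lieCoords L).conj.toLinearMap ∘ₗ ((ad ℂ L : L →ₗ[ℂ] Module.End ℂ L) ∘ₗ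
        (lieCoords L).symm.toLinearMap)))

lemma lieCoordsBracket_apply (x y : Fin (Module.finrank ℂ L) → ℂ) :
    lieCoordsBracket L x y = lieCoords L ⁅(lieCoords L).symm x, (lieCoords L).symm y⁆ := rfl

lemma lieCoordsBracket_leibniz (u x y : Fin (Module.finrank ℂ L) → ℂ) :
    lieCoordsBracket L u (lieCoordsBracket L x y) =
      lieCoordsBracket L (lieCoordsBracket L u x) y +
        lieCoordsBracket L x (lieCoordsBracket L u y) := by
  simp only [lieCoordsBracket_apply, LinearEquiv.symm_apply_apply, ← map_add]
  rw [leibniz_lie]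

/-- The automorphism `exp (ad u)`. -/
noncomputable def expAd (u : L) : L ≃ₗ⁅ℂ⁆ L where
  toFun x := (lieCoords L).symm (NormedSpace.exp (lieCoordsBracket L (lieCoords L u))
    (lieCoords L x))
  map_add' x y := by simp only [map_add]
  map_smul' c x := by simp only [map_smul, RingHom.id_apply]
  map_lie' := fun {x y} => by
    have exp_lie := exp_apply_bilin (lieCoordsBracket_leibniz (lieCoords L u)) (lieCoords L x)
      (lieCoords L y)
    simp only [lieCoordsBracket_apply (lieCoords L x), LinearEquiv.symm_apply_apply] at exp_lie
    rw [exp_lie, lieCoordsBracket_apply, LinearEquiv.symm_apply_apply]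
  invFun x := (lieCoords L).symm (NormedSpace.exp (-lieCoordsBracket L (lieCoords L u))
    (lieCoords L x))
  left_inv x := by
    simp only [LinearEquiv.apply_symm_apply, exp_neg_apply_exp_apply, LinearEquiv.symm_apply_apply]
  right_inv x := by
    have exp_exp_neg := exp_neg_apply_exp_apply (-lieCoordsBracket L (lieCoords L u))
      (lieCoords L x)
    rw [neg_neg] at exp_exp_neg
    simp only [LinearEquiv.apply_symm_apply, exp_exp_neg, LinearEquiv.symm_apply_apply]

lemma expAd_apply (u x : L) : expAd u x = (lieCoords L).symm
    (NormedSpace.exp (lieCoordsBracket L (lieCoords L u)) (lieCoords L x)) := rfl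

lemma expAd_of_lie_eq_smul {u x : L} {c : ℂ} (h : ⁅u, x⁆ = c • x) :
    expAd u x = Complex.exp c • x := by
  have exp_eq := exp_apply_eq_of_hasDerivAt (D := lieCoordsBracket L (lieCoords L u))
    (γ := fun t => Complex.exp (t * c) • lieCoords L x) fun t => by
    refine ((((hasDerivAt_id t).mul_const c).cexp).smul_const (lieCoords L x)).congr_deriv ?_
    simp [lieCoordsBracket_apply, h, smul_smul]
  simp only [zero_mul, Complex.exp_zero, one_smul, one_mul] at exp_eq
  rw [expAd_apply, exp_eq, map_smul, LinearEquiv.symm_apply_apply]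

lemma expAd_of_lie_lie_lie_eq_zero {u x y z : L} (hx : ⁅u, x⁆ = y) (hy : ⁅u, y⁆ = z)
    (hz : ⁅u, z⁆ = 0) : expAd u x = x + y + (1 / 2 : ℂ) • z := by
  have exp_eq := exp_apply_eq_of_hasDerivAt (D := lieCoordsBracket L (lieCoords L u))
    (γ := fun t => lieCoords L x + t • lieCoords L y + (t ^ 2 / 2) • lieCoords L z) fun t => by
    refine ((((hasDerivAt_id t).smul_const (lieCoords L y)).const_add (lieCoords L x)).add
      ((((hasDerivAt_id t).pow 2).div_const 2).smul_const (lieCoords L z))).congr_deriv ?_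
    simp [lieCoordsBracket_apply, hx, hy, hz]
  simp only [zero_smul, add_zero, ne_eq, OfNat.ofNat_ne_zero, not_false_eq_true, zero_pow,
    zero_div, one_smul, one_pow] at exp_eq
  rw [expAd_apply, exp_eq, map_add, map_add, map_smul]
  simp only [LinearEquiv.symm_apply_apply]

lemma expAd_of_lie_lie_eq_zero {u x y : L} (hx : ⁅u, x⁆ = y) (hy : ⁅u, y⁆ = 0) :
    expAd u x = x + y := by
  simpa using expAd_of_lie_lie_lie_eq_zero hx hy (lie_zero u)

lemma expAd_of_lie_eq_zero {u x : L} (hx : ⁅u, x⁆ = 0) : expAd u x = x := by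
  simpa using expAd_of_lie_lie_eq_zero hx (lie_zero u)

end ExpAd

/-! ### Engel subalgebras and conjugacy -/

section Engel

open Filter Topology LieAlgebra LieSubalgebra

attribute [local instance] LieRing.ofAssociativeRing

section CommRing

variable {R L : Type*} [CommRing R] [LieRing L] [LieAlgebra R L]

lemma apply_mem_engel_apply_iff (g : L ≃ₗ⁅R⁆ L) {x y : L} :
    g y ∈ engel R (g x) ↔ y ∈ engel R x := by
  have ad_pow_apply (n : ℕ) : (ad R L (g x) ^ n) (g y) = g ((ad R L x ^ n) y) :=
    (lieHom_ad_pow_apply g.toLieHom x y n).symm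
  simp only [mem_engel_iff, ad_pow_apply, map_eq_zero_iff g g.injective]

lemma finrank_engel_apply (g : L ≃ₗ⁅R⁆ L) (x : L) :
    Module.finrank R (engel R (g x)) = Module.finrank R (engel R x) := by
  have engel_apply : (engel R (g x)).toSubmodule =
      (engel R x).toSubmodule.map (g.toLinearEquiv : L →ₗ[R] L) := by
    ext y
    obtain ⟨y, rfl⟩ := g.surjective y
    exact (apply_mem_engel_apply_iff g).trans
      (g.injective.mem_set_image (s := (engel R x : Set L))).symm
  exact (congrArg (fun W : Submodule R L => Module.finrank R W) engel_apply).trans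
    (LinearEquiv.finrank_map_eq g.toLinearEquiv (engel R x).toSubmodule)

end CommRing

section Field

variable {K L : Type*} [Field K] [LieRing L] [LieAlgebra K L] [FiniteDimensional K L]

lemma range_ad_sup_engel (x : L) : LinearMap.range (ad K L x) ⊔ (engel K x).toSubmodule = ⊤ := by
  rw [eq_top_iff, ← (ad K L x).isCompl_iSup_ker_pow_iInf_range_pow.sup_eq_top, sup_comm]
  refine sup_le_sup ?_ ?_
  · exact (iInf_le _ 1).trans (by simp)
  · exact iSup_le fun n y hy => (mem_engel_iff K x y).mpr ⟨n, hy⟩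

lemma isRegular_apply (g : L ≃ₗ⁅K⁆ L) {x : L} (hx : IsRegular K x) : IsRegular K (g x) := by
  rw [isRegular_iff_finrank_engel_eq_rank] at hx ⊢
  rw [finrank_engel_apply, hx]

lemma finite_setOf_not_isRegular {x d : L} {s₀ : K} (h : IsRegular K (x + s₀ • d)) :
    {s : K | ¬ IsRegular K (x + s • d)}.Finite := by
  let b := Module.finBasis K L
  let line : Fin (Module.finrank K L) → Polynomial K :=
    fun i => Polynomial.C (b.repr x i) + Polynomial.X * Polynomial.C (b.repr d i)
  let c := (LinearMap.polyCharpoly (ad K L).toLinearMap b).coeff (rank K L)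
  let p : Polynomial K := MvPolynomial.aeval line c
  have eval_p (s : K) : p.eval s = MvPolynomial.eval (b.repr (x + s • d)) c := by
    have repr_eq : b.repr (x + s • d) = fun i => Polynomial.aeval s (line i) := by
      funext i
      simp [line, mul_comm s]
    rw [← Polynomial.coe_aeval_eq_eval, ← AlgHom.comp_apply, MvPolynomial.comp_aeval, repr_eq,
      ← MvPolynomial.coe_aeval_eq_eval]
    rfl
  have isRegular_iff (s : K) : IsRegular K (x + s • d) ↔ p.eval s ≠ 0 := by
    rw [isRegular_iff_coeff_polyCharpoly_rank_ne_zero K b, eval_p]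
  have p_ne_zero : p ≠ 0 := by
    intro p_eq
    simp [isRegular_iff, p_eq] at h
  refine (Polynomial.finite_setOfPred_isRoot p_ne_zero).subset fun s hs => ?_
  simpa [isRegular_iff] using hs

lemma engel_eq_engel_of_mem [Infinite K] {x y : L} (hx : IsRegular K x) (hy : IsRegular K y)
    (hxy : y ∈ engel K x) : engel K y = engel K x := by
  rw [isRegular_iff_finrank_engel_eq_rank] at hx hy
  let E : {engel K z | z ∈ engel K x} := ⟨engel K x, x, self_mem_engel _ _, rfl⟩
  have isMin : IsMin E := by
    rintro ⟨_, z, hz, rfl⟩ hzx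
    have finrank_le : Module.finrank K (engel K x) ≤ Module.finrank K (engel K z) := by
      rw [hx]
      exact rank_le_finrank_engel K z
    exact (toSubmodule_injective (Submodule.eq_of_le_of_finrank_le hzx finrank_le)).ge
  have isBot : IsBot E := engel_isBot_of_isMin
    (Cardinal.natCast_le_aleph0.trans (Cardinal.infinite_iff.mp inferInstance))
    (engel K x) E le_rfl isMin
  have le : engel K x ≤ engel K y := isBot ⟨engel K y, y, hxy, rfl⟩
  exact (toSubmodule_injective
    (Submodule.eq_of_le_of_finrank_eq le (hx.trans hy.symm))).symm

end Field

variable {L : Type*} [LieRing L] [LieAlgebra ℂ L] [FiniteDimensional ℂ L]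

lemma eventually_exists_expAd_mem_engel (x d : L) (s₀ : ℂ) :
    ∀ᶠ s in 𝓝 s₀, ∃ u : L, expAd u (x + s • d) ∈ engel ℂ (x + s₀ • d) := by
  set w := x + s₀ • d
  have transversal : LinearMap.range ((lieCoordsBracket L).flip (lieCoords L w)).toLinearMap ⊔
      (engel ℂ w).toSubmodule.map (lieCoords L).toLinearMap = ⊤ := by
    rw [eq_top_iff, ← LinearEquiv.range (lieCoords L), LinearMap.range_eq_map,
      ← range_ad_sup_engel w, Submodule.map_sup]
    refine sup_le_sup_right ?_ _
    rintro _ ⟨_, ⟨y, rfl⟩, rfl⟩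
    refine ⟨lieCoords L (-y), ?_⟩
    simp only [ContinuousLinearMap.coe_coe, ContinuousLinearMap.flip_apply, lieCoordsBracket_apply,
      LinearEquiv.symm_apply_apply, neg_lie, lie_skew, ad_apply, LinearEquiv.coe_coe]
  have exists_exp_mem := eventually_exists_exp_apply_mem (lieCoordsBracket L)
    (Submodule.mem_map_of_mem (self_mem_engel ℂ w)) transversal
  have tendsto_line : Tendsto (fun s : ℂ => lieCoords L x + s • lieCoords L d) (𝓝 s₀)
      (𝓝 (lieCoords L w)) := by
    have : Continuous fun s : ℂ => lieCoords L x + s • lieCoords L d := by fun_prop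
    simpa [w] using this.tendsto s₀
  filter_upwards [tendsto_line.eventually exists_exp_mem]
  rintro s ⟨u, y, hy, hu⟩
  refine ⟨(lieCoords L).symm u, ?_⟩
  rw [expAd_apply, map_add, map_smul, LinearEquiv.apply_symm_apply, ← hu]
  simpa using hy

lemma exists_isRegular_of_eventually {x d : L} {s₀ s₁ : ℂ} (h : IsRegular ℂ (x + s₀ • d))
    {p : ℂ → Prop} (hp : ∀ᶠ s in 𝓝 s₁, p s) : ∃ s, p s ∧ IsRegular ℂ (x + s • d) := by
  have isRegular : ∀ᶠ s in 𝓝[≠] s₁, IsRegular ℂ (x + s • d) := by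
    have compl_mem := ((finite_setOf_not_isRegular h).subset
      (Set.sdiff_subset (t := {s₁}))).isClosed.isOpen_compl.mem_nhds (x := s₁) (by simp)
    filter_upwards [mem_nhdsWithin_of_mem_nhds compl_mem, self_mem_nhdsWithin] with s hs hne
    by_contra hs'
    exact hs ⟨hs', hne⟩
  exact ((hp.filter_mono nhdsWithin_le_nhds).and isRegular).exists

lemma isRegular_of_forall_lie_eq_zero {t : L}
    (ht : ∀ x ∈ engel ℂ t, ∀ y ∈ engel ℂ t, ⁅x, y⁆ = 0) : IsRegular ℂ t := by
  obtain ⟨r, hr⟩ := exists_isRegular ℂ L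
  have isRegular_one : IsRegular ℂ (t + (1 : ℂ) • (r - t)) := by simpa using hr
  obtain ⟨s, ⟨u, hu⟩, hs⟩ :=
    exists_isRegular_of_eventually isRegular_one (eventually_exists_expAd_mem_engel t (r - t) 0)
  rw [zero_smul, add_zero] at hu
  have engel_le : (engel ℂ t).toSubmodule ≤
      (engel ℂ (expAd u (t + s • (r - t)))).toSubmodule :=
    fun z hz => (mem_engel_iff _ _ _).mpr ⟨1, by simpa using ht _ hu z hz⟩
  have finrank_eq := (isRegular_iff_finrank_engel_eq_rank ℂ _).mp (isRegular_apply (expAd u) hs)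
  exact (isRegular_iff_finrank_engel_eq_rank ℂ t).mpr
    (((Submodule.finrank_mono engel_le).trans finrank_eq.le).antisymm (rank_le_finrank_engel ℂ t))

/-- Two elements are related if their Engel subalgebras are conjugate under automorphisms. -/
def EngelConjugate (x y : L) : Prop := ∃ g : L ≃ₗ⁅ℂ⁆ L, engel ℂ (g x) = engel ℂ y

omit [FiniteDimensional ℂ L] in
lemma EngelConjugate.symm {x y : L} (h : EngelConjugate x y) : EngelConjugate y x := by
  obtain ⟨g, hg⟩ := h
  refine ⟨g.symm, ?_⟩
  ext z
  rw [← apply_mem_engel_apply_iff g, LieEquiv.apply_symm_apply, ← hg, apply_mem_engel_apply_iff]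

omit [FiniteDimensional ℂ L] in
lemma EngelConjugate.trans {x y z : L} (hxy : EngelConjugate x y) (hyz : EngelConjugate y z) :
    EngelConjugate x z := by
  obtain ⟨g₁, h₁⟩ := hxy
  obtain ⟨g₂, h₂⟩ := hyz
  refine ⟨g₁.trans g₂, ?_⟩
  ext w
  rw [← h₂, LieEquiv.trans_apply, ← g₂.apply_symm_apply w, apply_mem_engel_apply_iff,
    apply_mem_engel_apply_iff, h₁]

-- Regular points of a complex line form a connected set, on which `EngelConjugate` is locally
-- constant.
lemma engelConjugate_of_isRegular {x d : L} {s t : ℂ} (hs : IsRegular ℂ (x + s • d))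
    (ht : IsRegular ℂ (x + t • d)) : EngelConjugate (x + s • d) (x + t • d) := by
  have isPreconnected : IsPreconnected {s : ℂ | IsRegular ℂ (x + s • d)} := by
    have := ((finite_setOf_not_isRegular ht).countable.isPathConnected_compl_of_one_lt_rank
      (by rw [Complex.rank_real_complex]; norm_num)).isConnected.isPreconnected
    simpa [Set.compl_ofPred] using this
  refine IsPreconnected.induction₂' isPreconnected
    (fun a b => EngelConjugate (x + a • d) (x + b • d)) (fun a ha => ?_)
    (fun _ _ _ _ _ _ => EngelConjugate.trans) hs ht
  filter_upwards [mem_nhdsWithin_of_mem_nhds (eventually_exists_expAd_mem_engel x d a),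
    self_mem_nhdsWithin] with b hb hb_regular
  obtain ⟨u, hu⟩ := hb
  have conjugate : EngelConjugate (x + b • d) (x + a • d) :=
    ⟨expAd u, engel_eq_engel_of_mem ha (isRegular_apply (expAd u) hb_regular) hu⟩
  exact ⟨conjugate.symm, conjugate⟩

theorem exists_apply_mem_engel {t h : L} (ht : ∀ x ∈ engel ℂ t, ∀ y ∈ engel ℂ t, ⁅x, y⁆ = 0)
    (hh : ∀ x ∈ engel ℂ h, ⁅h, x⁆ = 0) : ∃ g : L ≃ₗ⁅ℂ⁆ L, g h ∈ engel ℂ t := by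
  have isRegular_zero : IsRegular ℂ (t + (0 : ℂ) • (h - t)) := by
    simpa using isRegular_of_forall_lie_eq_zero ht
  obtain ⟨s, ⟨u, hu⟩, hs⟩ :=
    exists_isRegular_of_eventually isRegular_zero (eventually_exists_expAd_mem_engel t (h - t) 1)
  rw [one_smul, add_sub_cancel] at hu
  obtain ⟨g, hg⟩ := engelConjugate_of_isRegular hs isRegular_zero
  rw [zero_smul, add_zero] at hg
  refine ⟨(expAd u).symm.trans g, ?_⟩
  rw [← hg, LieEquiv.trans_apply, apply_mem_engel_apply_iff, ← apply_mem_engel_apply_iff (expAd u),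
    LieEquiv.apply_symm_apply]
  refine (mem_engel_iff _ _ _).mpr ⟨1, ?_⟩
  rw [pow_one, ad_apply, ← lie_skew, hh _ hu, neg_zero]

end Engel

/-! ### Finite-dimensional modules over an `sl₂`-triple -/

lemma isNilpotent_of_commutator_eq_smul {K A : Type*} [Field K] [CharZero K] [Ring A] [Algebra K A]
    [FiniteDimensional K A] {a b : A} {c : K} (hc : c ≠ 0) (h : a * b - b * a = c • b) :
    IsNilpotent b := by
  have commutator_pow (n : ℕ) : a * b ^ n - b ^ n * a = (n * c) • b ^ n := by
    induction n with
    | zero => simp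
    | succ n ih =>
      calc a * b ^ (n + 1) - b ^ (n + 1) * a
          = (a * b ^ n - b ^ n * a) * b + b ^ n * (a * b - b * a) := by
            rw [pow_succ]; noncomm_ring
        _ = ((n + 1 : ℕ) * c) • b ^ (n + 1) := by
            rw [ih, h, smul_mul_assoc, mul_smul_comm, ← pow_succ, ← add_smul]
            push_cast
            ring_nf
  by_contra! b_not_nilpotent
  have linearIndependent_pow := Module.End.eigenvectors_linearIndependent'
    (LinearMap.mulLeft K a - LinearMap.mulRight K a) (fun n : ℕ => n * c)
    (fun m n hmn => by simpa [hc] using hmn) (fun n => b ^ n) fun n =>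
    Module.End.hasEigenvector_iff.mpr ⟨Module.End.mem_eigenspace_iff.mpr (commutator_pow n),
      fun hn => b_not_nilpotent ⟨n, hn⟩⟩
  have := linearIndependent_pow.finite
  exact not_finite ℕ

open Polynomial in
lemma apply_eq_smul_of_squarefree_aeval_eq_zero {K M : Type*} [Field K] [AddCommGroup M]
    [Module K M] {T : Module.End K M} {p : Polynomial K} {m : M} {μ : K} (hp : Squarefree p)
    (hpm : aeval T p m = 0) (hm : T (T m - μ • m) = μ • (T m - μ • m)) : T m = μ • m := by
  classical
  have gcd_dvd : EuclideanDomain.gcd ((X - C μ) ^ 2) p ∣ X - C μ :=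
    ((hp.squarefree_of_dvd (EuclideanDomain.gcd_dvd_right _ _)).dvd_pow_iff_dvd two_ne_zero).mp
      (EuclideanDomain.gcd_dvd_left _ _)
  have aeval_sq : aeval T ((X - C μ) ^ 2) m = 0 := by
    simpa [pow_two, Module.algebraMap_end_apply, sub_eq_zero] using hm
  have aeval_gcd : aeval T (EuclideanDomain.gcd ((X - C μ) ^ 2) p) m = 0 := by
    rw [EuclideanDomain.gcd_eq_gcd_ab, mul_comm _ (EuclideanDomain.gcdA _ _),
      mul_comm _ (EuclideanDomain.gcdB _ _), map_add, map_mul, map_mul, LinearMap.add_apply,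
      Module.End.mul_apply, Module.End.mul_apply, aeval_sq, hpm, map_zero, map_zero, add_zero]
  obtain ⟨q, hq⟩ := gcd_dvd
  have aeval_sub : aeval T (X - C μ) m = 0 := by
    rw [hq, mul_comm, map_mul, Module.End.mul_apply, aeval_gcd, map_zero]
  simpa [Module.algebraMap_end_apply, sub_eq_zero] using aeval_sub

namespace SlTwoTriple

open LieModule Polynomial

variable {K L M : Type*} [Field K] [LieRing L] [LieAlgebra K L] [AddCommGroup M] [Module K M]
  [LieRingModule L M] [LieModule K L M] {h e f : L} {m : M} {μ : K}

section Commutation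

variable (t : IsSl2Triple h e f)

include t

lemma lie_e_lie_h (m : M) : ⁅e, ⁅h, m⁆⁆ = ⁅h, ⁅e, m⁆⁆ - (2 : K) • ⁅e, m⁆ := by
  rw [leibniz_lie h e m, t.lie_h_e_smul K, smul_lie]
  abel

lemma lie_h_lie_e (hm : ⁅h, m⁆ = μ • m) : ⁅h, ⁅e, m⁆⁆ = (μ + 2) • ⁅e, m⁆ := by
  simpa using t.lie_h_pow_toEnd_e hm 1

lemma lie_h_lie_f (hm : ⁅h, m⁆ = μ • m) : ⁅h, ⁅f, m⁆⁆ = (μ - 2) • ⁅f, m⁆ := by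
  rw [leibniz_lie h f m, t.lie_lie_smul_f K, neg_lie, smul_lie, hm, lie_smul]
  module

lemma pow_toEnd_f_lie_h (n : ℕ) (m : M) :
    (toEnd K L M f ^ n) ⁅h, m⁆ =
      ⁅h, (toEnd K L M f ^ n) m⁆ + (2 * n : K) • (toEnd K L M f ^ n) m := by
  induction n with
  | zero => simp
  | succ n ih =>
    rw [pow_succ', Module.End.mul_apply, ih, Module.End.mul_apply, toEnd_apply_apply,
      toEnd_apply_apply, lie_add, lie_smul, leibniz_lie h f, t.lie_lie_smul_f K, neg_lie, smul_lie]
    push_cast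
    module

lemma lie_e_pow_succ_toEnd_f (n : ℕ) (m : M) :
    ⁅e, (toEnd K L M f ^ (n + 1)) m⁆ = (toEnd K L M f ^ (n + 1)) ⁅e, m⁆ +
      (n + 1 : K) • (toEnd K L M f ^ n) (⁅h, m⁆ - (n : K) • m) := by
  have pow_succ_apply (k : ℕ) (x : M) :
      (toEnd K L M f ^ (k + 1)) x = ⁅f, (toEnd K L M f ^ k) x⁆ := by
    rw [pow_succ', Module.End.mul_apply, toEnd_apply_apply]
  induction n with
  | zero =>
    simp [leibniz_lie e f m, t.lie_e_f, add_comm]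
  | succ n ih =>
    rw [pow_succ_apply, leibniz_lie e f, t.lie_e_f, ih, pow_succ_apply (n + 1), lie_add, lie_smul,
      ← pow_succ_apply n, map_sub, map_sub, map_smul, map_smul, pow_toEnd_f_lie_h t]
    push_cast
    module

lemma lie_f_pow_succ_toEnd_e (n : ℕ) (m : M) :
    ⁅f, (toEnd K L M e ^ (n + 1)) m⁆ = (toEnd K L M e ^ (n + 1)) ⁅f, m⁆ -
      (n + 1 : K) • (toEnd K L M e ^ n) (⁅h, m⁆ + (n : K) • m) := by
  rw [lie_e_pow_succ_toEnd_f t.symm]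
  simp only [neg_lie, map_sub, map_neg, map_smul, map_add]
  module

lemma pow_toEnd_e_pow_toEnd_f (n : ℕ) (hm : ⁅e, m⁆ = 0) :
    (toEnd K L M e ^ n) ((toEnd K L M f ^ n) m) =
      (n.factorial : K) • aeval (toEnd K L M h) (∏ i ∈ Finset.range n, (X - C (i : K))) m := by
  induction n generalizing m with
  | zero => simp
  | succ n ih =>
    have lie_e_sub : ⁅e, ⁅h, m⁆ - (n : K) • m⁆ = 0 := by
      simp [lie_e_lie_h (K := K) t, hm]
    rw [pow_succ, Module.End.mul_apply, toEnd_apply_apply, lie_e_pow_succ_toEnd_f t, hm, map_zero,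
      zero_add, map_smul, ih lie_e_sub, smul_smul, Finset.prod_range_succ, map_mul,
      Module.End.mul_apply, Nat.factorial_succ]
    simp [Nat.cast_smul_eq_nsmul]

end Commutation

variable [CharZero K] [FiniteDimensional K M] (t : IsSl2Triple h e f)

include t

variable (K M) in
lemma isNilpotent_toEnd_e : IsNilpotent (toEnd K L M e) :=
  isNilpotent_of_commutator_eq_smul (a := toEnd K L M h) (two_ne_zero' K) <| by
    ext m
    simp [← lie_lie, t.lie_h_e_smul K]

lemma exists_pow_toEnd_e_eq_zero_succ (hm : m ≠ 0) :
    ∃ n, (toEnd K L M e ^ n) m ≠ 0 ∧ (toEnd K L M e ^ (n + 1)) m = 0 := by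
  obtain ⟨n, hn⟩ := isNilpotent_toEnd_e K M t
  exact Nat.exists_not_and_succ_of_not_zero_of_exists hm ⟨n, by rw [hn, LinearMap.zero_apply]⟩

lemma exists_int_of_lie_h_eq_smul (hm₀ : m ≠ 0) (hm : ⁅h, m⁆ = μ • m) : ∃ n : ℤ, μ = n := by
  obtain ⟨n, hn₁, hn₂⟩ := exists_pow_toEnd_e_eq_zero_succ (K := K) t hm₀
  have primitive : t.HasPrimitiveVectorWith ((toEnd K L M e ^ n) m) (μ + 2 * n) :=
    ⟨hn₁, t.lie_h_pow_toEnd_e hm n, by rw [IsSl2Triple.lie_e_pow_toEnd_e, hn₂]⟩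
  obtain ⟨k, hk⟩ := primitive.exists_nat
  exact ⟨k - 2 * n, by push_cast; linear_combination hk⟩

-- If `fⁿ = 0` on `M`, the formula for `eⁿfⁿ` makes `h(h - 1)⋯(h - n + 1)` vanish on `ker e`.
lemma exists_aeval_toEnd_h_eq_zero (he : ⁅e, m⁆ = 0) :
    ∃ n : ℕ, aeval (toEnd K L M h) (∏ i ∈ Finset.range n, (X - C (i : K))) m = 0 := by
  obtain ⟨n, hn⟩ := isNilpotent_toEnd_e K M t.symm
  have aeval_apply := pow_toEnd_e_pow_toEnd_f (K := K) t n he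
  rw [hn, LinearMap.zero_apply, map_zero, eq_comm, smul_eq_zero_iff_right
    (Nat.cast_ne_zero.mpr n.factorial_ne_zero)] at aeval_apply
  exact ⟨n, aeval_apply⟩

lemma lie_h_eq_smul_of_lie_e_eq_zero (he : ⁅e, m⁆ = 0)
    (hm : ⁅h, ⁅h, m⁆ - μ • m⁆ = μ • (⁅h, m⁆ - μ • m)) : ⁅h, m⁆ = μ • m := by
  obtain ⟨n, hn⟩ := exists_aeval_toEnd_h_eq_zero (K := K) t he
  exact apply_eq_smul_of_squarefree_aeval_eq_zero (separable_prod_X_sub_C_iff'.mpr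
    fun i _ j _ hij => Nat.cast_injective hij).squarefree hn hm

lemma exists_lie_e_eq (hμ : ∀ n : ℕ, μ ≠ -n) (hm : ⁅h, m⁆ = μ • m) :
    ∃ x : M, ⁅h, x⁆ = (μ - 2) • x ∧ ⁅e, x⁆ = m := by
  let V : Submodule K M := (toEnd K L M h).eigenspace μ
  have mem_V (x : M) : x ∈ V ↔ ⁅h, x⁆ = μ • x := by
    rw [Module.End.mem_eigenspace_iff, toEnd_apply_apply]
  let T : M →ₗ[K] M := toEnd K L M e ∘ₗ toEnd K L M f
  have T_mem (x : M) (hx : x ∈ V) : T x ∈ V := by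
    rw [mem_V] at hx ⊢
    simpa [T] using lie_h_lie_e t (lie_h_lie_f t hx)
  have T_injective : Function.Injective (T.restrict T_mem) := by
    rw [← LinearMap.ker_eq_bot, LinearMap.ker_eq_bot']
    rintro ⟨y, hy⟩ hTy
    have lie_e_lie_f : ⁅e, ⁅f, y⁆⁆ = 0 := congrArg Subtype.val hTy
    rw [Submodule.mk_eq_zero]
    by_contra hy₀
    obtain ⟨n, hn₁, hn₂⟩ := exists_pow_toEnd_e_eq_zero_succ (K := K) t hy₀
    have lie_f_eq := lie_f_pow_succ_toEnd_e (K := K) t n y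
    rw [hn₂, lie_zero, pow_succ, Module.End.mul_apply, toEnd_apply_apply, lie_e_lie_f, map_zero,
      zero_sub, eq_comm, neg_eq_zero, smul_eq_zero, (mem_V y).mp hy, ← add_smul, map_smul,
      smul_eq_zero] at lie_f_eq
    obtain hn | hn | hn := lie_f_eq
    exacts [n.cast_add_one_ne_zero hn, hμ n (eq_neg_of_add_eq_zero_left hn), hn₁ hn]
  obtain ⟨⟨y, hy⟩, hTy⟩ := LinearMap.surjective_of_injective T_injective ⟨m, (mem_V m).mpr hm⟩
  exact ⟨⁅f, y⁆, lie_h_lie_f t ((mem_V y).mp hy), congrArg Subtype.val hTy⟩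

-- Induction on the nilpotency order of `e`: by `exists_lie_e_eq`, `⁅e, m⁆` lifts to an eigenvector
-- that differs from `m` by an element of `ker e`.
lemma lie_h_eq_natCast_smul {k : ℕ}
    (hm : ⁅h, ⁅h, m⁆ - (k : K) • m⁆ = (k : K) • (⁅h, m⁆ - (k : K) • m)) :
    ⁅h, m⁆ = (k : K) • m := by
  obtain ⟨n, hn⟩ := isNilpotent_toEnd_e K M t
  replace hn : (toEnd K L M e ^ n) m = 0 := by rw [hn, LinearMap.zero_apply]
  induction n generalizing k m with
  | zero => simp_all
  | succ n ih =>
    have lie_e_eigenvector : ⁅h, ⁅e, m⁆⁆ = ((k : K) + 2) • ⁅e, m⁆ := by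
      suffices ⁅h, ⁅e, m⁆⁆ = ((k + 2 : ℕ) : K) • ⁅e, m⁆ by simpa using this
      refine ih ?_ (by rwa [pow_succ, Module.End.mul_apply] at hn)
      have lie_e_hm := congrArg (⁅e, ·⁆) hm
      simp only [lie_sub, lie_smul, lie_e_lie_h (K := K) t] at lie_e_hm ⊢
      push_cast
      linear_combination (norm := module) (1 : K) • lie_e_hm
    obtain ⟨x, hx, hxe⟩ := exists_lie_e_eq t (fun n hn => by
      have : (k + 2 + n : K) = 0 := by linear_combination hn
      norm_cast at this
      omega) lie_e_eigenvector
    rw [add_sub_cancel_right] at hx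
    have sub_eigenvector : ⁅h, m - x⁆ = (k : K) • (m - x) :=
      lie_h_eq_smul_of_lie_e_eq_zero t (by rw [lie_sub, hxe, sub_self]) <| by
        simp only [lie_sub, lie_smul, hx] at hm ⊢
        linear_combination (norm := module) (1 : K) • hm
    rw [lie_sub, hx, smul_sub] at sub_eigenvector
    exact sub_left_injective sub_eigenvector

variable (K) in
lemma lie_h_eq_zero_of_mem_engel [FiniteDimensional K L] {x : L}
    (hx : x ∈ LieSubalgebra.engel K h) :
    ⁅h, x⁆ = 0 := by
  obtain ⟨n, hn⟩ := (LieSubalgebra.mem_engel_iff K _ _).mp hx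
  induction n generalizing x with
  | zero => simp_all
  | succ n ih =>
    have lie_lie_eq_zero : ⁅h, ⁅h, x⁆⁆ = 0 :=
      ih (LieSubalgebra.lie_mem _ (LieSubalgebra.self_mem_engel K h) hx)
        (by rwa [pow_succ, Module.End.mul_apply] at hn)
    simpa using lie_h_eq_natCast_smul (K := K) (m := x) (k := 0) t
      (by simpa using lie_lie_eq_zero)

variable (K) in
lemma eq_f_of_lie_eq [FiniteDimensional K L] {f' : L} (lie_e : ⁅e, f'⁆ = h)
    (lie_h : ⁅h, f'⁆ = (-2 : K) • f') : f' = f := by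
  by_contra hne
  have primitive : t.HasPrimitiveVectorWith (f' - f) (-2 : K) :=
    ⟨sub_ne_zero.mpr hne, by rw [lie_sub, lie_h, t.lie_lie_smul_f K]; module,
      by rw [lie_sub, lie_e, t.lie_e_f, sub_self]⟩
  obtain ⟨n, hn⟩ := primitive.exists_nat
  have : (n + 2 : K) = 0 := by rw [← hn]; ring
  norm_cast at this

end SlTwoTriple

/-! ### The Cartan subalgebra of a pinning and the Weyl group -/

section Eigenbasis

open Polynomial

variable {ι K V : Type*} [Field K] [AddCommGroup V] [Module K V] {b : Module.Basis ι K V}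
  {T : Module.End K V} {μ : ι → K}

lemma repr_aeval_of_apply_basis (hT : ∀ i, T (b i) = μ i • b i) (p : K[X]) (x : V) (i : ι) :
    b.repr (aeval T p x) i = p.eval (μ i) * b.repr x i := by
  have aeval_basis (j : ι) : aeval T p (b j) = p.eval (μ j) • b j :=
    Module.End.aeval_apply_of_hasEigenvector
      (Module.End.hasEigenvector_iff.mpr ⟨Module.End.mem_eigenspace_iff.mpr (hT j), b.ne_zero j⟩)
  suffices b.coord i ∘ₗ aeval T p = p.eval (μ i) • b.coord i from LinearMap.congr_fun this x
  refine b.ext fun j => ?_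
  obtain rfl | hij := eq_or_ne i j
  · simp [aeval_basis]
  · simp [aeval_basis, hij]

lemma isSemisimple_of_apply_basis [Finite ι] (hT : ∀ i, T (b i) = μ i • b i) :
    T.IsSemisimple := by
  classical
  have := Fintype.ofFinite ι
  have := b.finiteDimensional_of_finite
  refine Module.End.isSemisimple_of_squarefree_aeval_eq_zero
    (p := ∏ c ∈ Finset.univ.image μ, (X - C c))
    (separable_prod_X_sub_C_iff'.mpr fun x _ y _ hxy => hxy).squarefree ?_
  refine LinearMap.ext fun x => b.ext_elem fun i => ?_
  rw [repr_aeval_of_apply_basis hT, eval_prod,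
    Finset.prod_eq_zero (Finset.mem_image_of_mem μ (Finset.mem_univ i)) (by simp)]
  simp

end Eigenbasis

-- The reflection is realized by `exp(ad e) ∘ exp(-ad f) ∘ exp(ad e)`.
lemma exists_apply_eq_sub_smul {L : Type*} [LieRing L] [LieAlgebra ℂ L] [FiniteDimensional ℂ L]
    {h e f x : L} {c : ℂ} (t : IsSl2Triple h e f) (hxe : ⁅x, e⁆ = c • e) (hxf : ⁅x, f⁆ = -c • f) :
    ∃ g : L ≃ₗ⁅ℂ⁆ L, g x = x - c • h := by
  have lie_e_h : ⁅e, h⁆ = (-2 : ℂ) • e := by rw [← lie_skew, t.lie_h_e_smul ℂ, neg_smul]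
  have lie_neg_f_h : ⁅-f, h⁆ = (-2 : ℂ) • f := by
    rw [neg_lie, lie_skew, t.lie_lie_smul_f ℂ, neg_smul]
  have lie_neg_f_e : ⁅-f, e⁆ = h := by rw [neg_lie, lie_skew, t.lie_e_f]
  have lie_e_sub : ⁅e, x - (c / 2) • h⁆ = 0 := by
    rw [lie_sub, lie_smul, lie_e_h, ← lie_skew, hxe]
    module
  have lie_f_sub : ⁅-f, x - (c / 2) • h⁆ = 0 := by
    rw [lie_sub, lie_smul, lie_neg_f_h, neg_lie, lie_skew, hxf]
    module
  have exp_e_h : expAd e h = h + (-2 : ℂ) • e := expAd_of_lie_lie_eq_zero lie_e_h (by simp)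
  have exp_e_e : expAd e e = e := expAd_of_lie_eq_zero (lie_self e)
  have exp_f_h : expAd (-f) h = h + (-2 : ℂ) • f := expAd_of_lie_lie_eq_zero lie_neg_f_h (by simp)
  have exp_f_e : expAd (-f) e = e + h + (1 / 2 : ℂ) • ((-2 : ℂ) • f) :=
    expAd_of_lie_lie_lie_eq_zero lie_neg_f_e lie_neg_f_h (by simp)
  let g : L ≃ₗ⁅ℂ⁆ L := (expAd e).trans ((expAd (-f)).trans (expAd e))
  have g_h : g h = -h := by
    have exp_f_add : expAd (-f) (h + (-2 : ℂ) • e) = -h + (-2 : ℂ) • e := by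
      rw [map_add, map_smul, exp_f_h, exp_f_e]
      module
    rw [LieEquiv.trans_apply, LieEquiv.trans_apply, exp_e_h, exp_f_add, map_add, map_smul, map_neg,
      exp_e_h, exp_e_e]
    module
  have g_sub : g (x - (c / 2) • h) = x - (c / 2) • h := by
    rw [LieEquiv.trans_apply, LieEquiv.trans_apply, expAd_of_lie_eq_zero lie_e_sub,
      expAd_of_lie_eq_zero lie_f_sub, expAd_of_lie_eq_zero lie_e_sub]
  refine ⟨g, ?_⟩
  rw [map_sub, map_smul, g_h] at g_sub
  linear_combination (norm := module) g_sub

namespace E6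

open LieAlgebra CartanMatrix Polynomial

section Weight

variable {R : Type*} [CommRing R]

lemma weight_coroot (n : Fin 6 → R) (i : Fin 6) : weight n (.coroot i) = 0 := by
  simp [weight, root]

lemma weight_neg_simpleRoot (n : Fin 6 → R) (i : Fin 6) :
    weight n (.neg (simpleRoot i)) = -n i := by
  rw [← weight_simpleRoot n i, ← weight_flip, Index.flip]

lemma weight_intCast (n : Fin 6 → ℤ) (a : Index) : weight (fun i => (n i : R)) a = weight n a := by
  simp [weight, dotProduct]

lemma weight_add (m n : Fin 6 → R) (a : Index) : weight (m + n) a = weight m a + weight n a :=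
  add_dotProduct m n _

lemma weight_smul (c : R) (n : Fin 6 → R) (a : Index) : weight (c • n) a = c * weight n a :=
  smul_dotProduct c n _

lemma exists_eq_coroot_of_weight_one_eq_zero {a : Index} (ha : weight (1 : Fin 6 → ℤ) a = 0) :
    ∃ i, a = .coroot i := by
  revert a
  decide +kernel

end Weight

namespace Pinning

variable {L : Type*} [LieRing L] [LieAlgebra ℂ L] (P : Pinning L)

lemma isSl2Triple (i : Fin 6) : IsSl2Triple (P.basis (.coroot i)) (P.basis (.pos (simpleRoot i)))
    (P.basis (.neg (simpleRoot i))) where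
  h_ne_zero := P.basis.ne_zero _
  lie_e_f := by
    rw [P.lie_basis (n := [(.coroot i, 1)]) (by revert i; decide +kernel)]
    simp
  lie_h_e_nsmul := by
    have cartan_diag : E₆ i i = 2 := by revert i; decide
    rw [lie_coroot, weight_simpleRoot, cartan_diag, ← Nat.cast_smul_eq_nsmul ℂ]
    simp
  lie_h_f_nsmul := by
    have cartan_diag : E₆ i i = 2 := by revert i; decide
    rw [lie_coroot, weight_neg_simpleRoot, cartan_diag, ← Nat.cast_smul_eq_nsmul ℂ]
    simp

lemma repr_lie_tor (n : Fin 6 → ℂ) (x : L) (a : Index) :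
    P.basis.repr ⁅P.tor n, x⁆ a = weight n a * P.basis.repr x a := by
  simpa using repr_aeval_of_apply_basis (T := ad ℂ L (P.tor n)) (P.lie_tor n) X x a

lemma isSemisimple_ad_tor (n : Fin 6 → ℂ) : (ad ℂ L (P.tor n)).IsSemisimple :=
  isSemisimple_of_apply_basis (P.lie_tor n)

lemma lie_tor_eq_smul_iff {n : Fin 6 → ℂ} {c : ℂ} {x : L} :
    ⁅P.tor n, x⁆ = c • x ↔ ∀ a, P.basis.repr x a ≠ 0 → weight n a = c := by
  rw [P.basis.ext_elem_iff]
  refine forall_congr' fun a => ?_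
  rw [repr_lie_tor, map_smul, Finsupp.smul_apply, smul_eq_mul, mul_eq_mul_right_iff, or_comm,
    or_iff_not_imp_left]

lemma lie_tor_eq_zero_iff {n : Fin 6 → ℂ} {x : L} :
    ⁅P.tor n, x⁆ = 0 ↔ ∀ a, P.basis.repr x a ≠ 0 → weight n a = 0 := by
  rw [← P.lie_tor_eq_smul_iff, zero_smul]

lemma tor_zero : P.tor 0 = 0 := by
  simpa using P.tor_smul 0 0

lemma tor_injective : Function.Injective P.tor := by
  intro m n hmn
  funext i
  have lie_eq := P.lie_tor m (.pos (simpleRoot i))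
  rw [hmn, lie_tor, weight_simpleRoot, weight_simpleRoot] at lie_eq
  exact (smul_left_injective ℂ (P.basis.ne_zero _) lie_eq).symm

lemma exists_eq_tor {x : L} (hx : ⁅P.tor 1, x⁆ = 0) : ∃ n, x = P.tor n := by
  rw [← P.basis.sum_repr x]
  refine Finset.sum_induction _ (fun y => ∃ n, y = P.tor n) ?_ ⟨0, P.tor_zero.symm⟩ fun a _ => ?_
  · rintro _ _ ⟨m, rfl⟩ ⟨n, rfl⟩
    exact ⟨m + n, (P.tor_add m n).symm⟩
  · by_cases ha : P.basis.repr x a = 0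
    · exact ⟨0, by rw [ha, zero_smul, tor_zero]⟩
    · have weight_eq := P.lie_tor_eq_zero_iff.mp hx a ha
      obtain ⟨i, rfl⟩ := exists_eq_coroot_of_weight_one_eq_zero (a := a) <| by
        have cast_weight := weight_intCast (R := ℂ) 1 a
        simp only [Pi.one_apply, Int.cast_one] at cast_weight
        exact_mod_cast cast_weight.symm.trans weight_eq
      exact ⟨_, by rw [← tor_cartan, ← tor_smul]⟩

lemma lie_tor_tor (m n : Fin 6 → ℂ) : ⁅P.tor m, P.tor n⁆ = 0 := by
  rw [tor.eq_def P n, lie_sum]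
  simp [lie_tor, weight_coroot]

lemma exists_eq_tor_of_mem_engel {x : L}
    (hx : x ∈ LieSubalgebra.engel ℂ (P.tor 1)) : ∃ n, x = P.tor n := by
  obtain ⟨r, hr⟩ := (LieSubalgebra.mem_engel_iff ℂ _ _).mp hx
  refine P.exists_eq_tor (P.lie_tor_eq_zero_iff.mpr fun a ha => ?_)
  have repr_pow := repr_aeval_of_apply_basis (T := ad ℂ L (P.tor 1)) (P.lie_tor 1) (X ^ r) x a
  simp only [map_pow, aeval_X, hr, map_zero, Finsupp.zero_apply, eval_pow, eval_X] at repr_pow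
  exact eq_zero_of_pow_eq_zero ((mul_eq_zero.mp repr_pow.symm).resolve_right ha)

lemma exists_apply_tor_eq_reflection [FiniteDimensional ℂ L] (n : Fin 6 → ℂ) (i : Fin 6) :
    ∃ g : L ≃ₗ⁅ℂ⁆ L, g (P.tor n) = P.tor (n - n i • fun j => (E₆ i j : ℂ)) := by
  obtain ⟨g, hg⟩ := exists_apply_eq_sub_smul (P.isSl2Triple i)
    ((P.lie_tor n _).trans (by rw [weight_simpleRoot]))
    ((P.lie_tor n _).trans (by rw [weight_neg_simpleRoot]))
  refine ⟨g, hg.trans ?_⟩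
  rw [sub_eq_add_neg n, ← neg_smul, tor_add, tor_smul, tor_cartan, neg_smul, sub_eq_add_neg]

variable {e h f : L}

include P in
lemma exists_int_tor_eq [FiniteDimensional ℂ L] (t : IsSl2Triple h e f) :
    ∃ (Q : Pinning L) (n : Fin 6 → ℤ), h = Q.tor fun i => n i := by
  obtain ⟨g, hg⟩ := exists_apply_mem_engel (t := P.tor 1) (h := h)
    (fun x hx y hy => by
      obtain ⟨m, rfl⟩ := P.exists_eq_tor_of_mem_engel hx
      obtain ⟨n, rfl⟩ := P.exists_eq_tor_of_mem_engel hy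
      exact P.lie_tor_tor m n)
    fun x => SlTwoTriple.lie_h_eq_zero_of_mem_engel ℂ t
  obtain ⟨n, hn⟩ := P.exists_eq_tor_of_mem_engel hg
  have h_eq : h = (P.map g.symm).tor n := by
    rw [map_tor, ← hn, LieEquiv.symm_apply_apply]
  have n_integral (i : Fin 6) : ∃ z : ℤ, n i = z :=
    SlTwoTriple.exists_int_of_lie_h_eq_smul t
      ((P.map g.symm).basis.ne_zero (.pos (simpleRoot i)))
      (by rw [h_eq, lie_tor, weight_simpleRoot])
  choose z hz using n_integral
  exact ⟨P.map g.symm, z, by rw [h_eq, funext hz]⟩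

lemma exists_forall_le_of_eq_tor [FiniteDimensional ℂ L] (h : L) :
    ∃ B : ℤ, ∀ (P : Pinning L) (n : Fin 6 → ℤ), h = P.tor (fun i => n i) → ∀ i, n i ≤ B := by
  have finite_eigenvalues : {z : ℤ | (ad ℂ L h).HasEigenvalue z}.Finite :=
    (Module.End.finite_hasEigenvalue (ad ℂ L h)).preimage Int.cast_injective.injOn
  obtain ⟨B, hB⟩ := finite_eigenvalues.bddAbove
  refine ⟨B, fun P n hn i => hB (Module.End.hasEigenvalue_of_hasEigenvector
    (x := P.basis (.pos (simpleRoot i))) (Module.End.hasEigenvector_iff.mpr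
      ⟨Module.End.mem_eigenspace_iff.mpr ?_, P.basis.ne_zero _⟩))⟩
  rw [ad_apply, hn, lie_tor, weight_simpleRoot]

end Pinning

/-- The coefficients of the sum of the positive roots in the simple roots. -/
def twoRho : Fin 6 → ℤ := ![16, 22, 30, 42, 30, 16]

lemma dotProduct_twoRho_cartan (i : Fin 6) : twoRho ⬝ᵥ E₆ i = 2 := by
  revert i
  decide +kernel

namespace Pinning

variable {L : Type*} [LieRing L] [LieAlgebra ℂ L] [FiniteDimensional ℂ L] {e h f : L}

-- A simple reflection at a negative value increases the pairing with `2ρ`, which is bounded.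
lemma exists_nonneg_tor_eq (P : Pinning L) (t : IsSl2Triple h e f) :
    ∃ (Q : Pinning L) (n : Fin 6 → ℤ), h = Q.tor (fun i => n i) ∧ ∀ i, 0 ≤ n i := by
  obtain ⟨B, hB⟩ := exists_forall_le_of_eq_tor h
  let IsPairing (z : ℤ) : Prop :=
    ∃ (P : Pinning L) (n : Fin 6 → ℤ), h = P.tor (fun i => n i) ∧ z = twoRho ⬝ᵥ n
  have pairing_le : ∀ z, IsPairing z → z ≤ twoRho ⬝ᵥ fun _ => B := by
    rintro _ ⟨P, n, hn, rfl⟩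
    exact dotProduct_le_dotProduct_of_nonneg_left (hB P n hn) fun i => by
      revert i
      decide
  obtain ⟨Q, n, hn⟩ := P.exists_int_tor_eq t
  obtain ⟨_, ⟨Q, n, hn, rfl⟩, maximal⟩ :=
    Int.exists_greatest_of_bdd ⟨_, pairing_le⟩ ⟨_, Q, n, hn, rfl⟩
  refine ⟨Q, n, hn, fun i => ?_⟩
  obtain ⟨g, hg⟩ := Q.exists_apply_tor_eq_reflection (fun i => n i) i
  have pairing_reflection : twoRho ⬝ᵥ (n - n i • E₆ i) ≤ twoRho ⬝ᵥ n := by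
    refine maximal _ ⟨Q.map g.symm, _, ?_, rfl⟩
    rw [map_tor, LieEquiv.eq_symm_apply, hn, hg]
    congr
    funext j
    simp
  rw [dotProduct_sub, dotProduct_smul, dotProduct_twoRho_cartan, smul_eq_mul] at pairing_reflection
  omega

end Pinning

end E6

namespace E6

open LieAlgebra Polynomial

/-! ### The dimension of the centralizer and the weighted Dynkin diagram -/

lemma root_nonneg_or_nonpos (a : Index) : 0 ≤ root a ∨ root a ≤ 0 := by
  cases a with
  | pos k => exact .inl fun i => Int.natCast_nonneg _
  | neg k => exact .inr fun i => Int.neg_nonpos_of_nonneg (Int.natCast_nonneg _)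
  | coroot i => exact .inl le_rfl

lemma root_eq_zero_of_weight_eq {n : Fin 6 → ℤ} (hn : 0 ≤ n) {z : ℤ} (hz : 0 ≤ z) {i : Fin 6}
    (hi : z < n i) {a : Index} (ha : weight n a = z) : root a i = 0 := by
  have weight_eq : weight n a = ∑ j, n j * root a j := by simp [weight, dotProduct]
  obtain root_nonneg | root_nonpos := root_nonneg_or_nonpos a
  · have le_weight : n i * root a i ≤ weight n a := weight_eq ▸
      Finset.single_le_sum (f := fun j => n j * root a j)
        (fun j _ => mul_nonneg (hn j) (root_nonneg j)) (Finset.mem_univ i)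
    have root_nonneg_i : 0 ≤ root a i := root_nonneg i
    nlinarith
  · have weight_le : weight n a ≤ n i * root a i := by
      rw [weight_eq, ← Finset.add_sum_erase _ _ (Finset.mem_univ i)]
      exact add_le_of_nonpos_right (Finset.sum_nonpos fun j _ =>
        mul_nonpos_of_nonneg_of_nonpos (hn j) (root_nonpos j))
    have root_nonpos_i : root a i ≤ 0 := root_nonpos i
    nlinarith

namespace Pinning

variable {L : Type*} [LieRing L] [LieAlgebra ℂ L] (P : Pinning L) {e f : L} {n : Fin 6 → ℤ}

lemma weight_eq_of_repr_ne_zero {z : ℤ} {x : L} (hx : ⁅P.tor (fun i => n i), x⁆ = (z : ℂ) • x)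
    {a : Index} (ha : P.basis.repr x a ≠ 0) : weight n a = z := by
  have weight_eq := P.lie_tor_eq_smul_iff.mp hx a ha
  rw [weight_intCast] at weight_eq
  exact_mod_cast weight_eq

section Distinguished

variable (hd : IsDistinguished L e)

include hd

-- The roots in the support of a distinguished element span the dual of the Cartan subalgebra.
lemma eq_zero_of_isDistinguished {m : Fin 6 → ℂ}
    (hm : ∀ a, P.basis.repr e a ≠ 0 → weight m a = 0) : m = 0 :=
  P.tor_injective <| (hd _ (P.lie_tor_eq_zero_iff.mpr hm) (P.isSemisimple_ad_tor m)).trans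
    P.tor_zero.symm

variable {z : ℤ} (he : ⁅P.tor (fun i => n i), e⁆ = (z : ℂ) • e)

include he

lemma le_of_isDistinguished (hz : 0 ≤ z) (hn : 0 ≤ n) (i : Fin 6) : n i ≤ z := by
  by_contra! hi
  have single_eq_zero := P.eq_zero_of_isDistinguished hd (m := Pi.single i 1) fun a ha => by
    simp [weight, root_eq_zero_of_weight_eq hn hz hi (P.weight_eq_of_repr_ne_zero he ha)]
  simpa using congrFun single_eq_zero i

lemma six_le_card_of_isDistinguished : 6 ≤ (Finset.univ.filter fun a => weight n a = z).card := by
  let evaluation : (Fin 6 → ℂ) →ₗ[ℂ] {a // weight n a = z} → ℂ :=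
    { toFun := fun m a => weight m a
      map_add' := fun m m' => funext fun a => weight_add m m' a
      map_smul' := fun c m => funext fun a => weight_smul c m a }
  have evaluation_injective : Function.Injective evaluation := by
    rw [← LinearMap.ker_eq_bot, LinearMap.ker_eq_bot']
    exact fun m hm => P.eq_zero_of_isDistinguished hd fun a ha =>
      congrFun hm ⟨a, P.weight_eq_of_repr_ne_zero he ha⟩
  simpa [Fintype.card_subtype] using LinearMap.finrank_le_finrank_of_injective evaluation_injective

end Distinguished

/-- The sum of the eigenspaces of `ad (P.tor n)` with eigenvalue at least `z`. -/
noncomputable def weightGE (n : Fin 6 → ℤ) (z : ℤ) : Submodule ℂ L :=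
  Submodule.span ℂ (P.basis '' {a | z ≤ weight n a})

lemma mem_weightGE {z : ℤ} {x : L} :
    x ∈ P.weightGE n z ↔ ∀ a, P.basis.repr x a ≠ 0 → z ≤ weight n a := by
  simp [weightGE, P.basis.mem_span_image, Set.subset_def]

lemma mem_weightGE_of_lie_eq_smul {y z : ℤ} {x : L} (hx : ⁅P.tor (fun i => n i), x⁆ = (z : ℂ) • x)
    (hz : y ≤ z) : x ∈ P.weightGE n y :=
  P.mem_weightGE.mpr fun _ ha => hz.trans_eq (P.weight_eq_of_repr_ne_zero hx ha).symm

lemma finrank_weightGE (n : Fin 6 → ℤ) (z : ℤ) :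
    Module.finrank ℂ (P.weightGE n z) = (Finset.univ.filter fun a => z ≤ weight n a).card := by
  rw [weightGE, Set.image_eq_range]
  refine (finrank_span_eq_card (P.basis.linearIndependent.comp _ Subtype.val_injective)).trans ?_
  simp [Fintype.card_subtype]

variable [FiniteDimensional ℂ L] (t : IsSl2Triple (P.tor fun i => n i) e f)

include t

lemma centralizer_le_weightGE : (centralizer L e).toSubmodule ≤ P.weightGE n 0 := by
  intro x hx
  have lie_e_x : ⁅e, x⁆ = 0 := by
    rw [← lie_skew, neg_eq_zero]
    exact hx
  obtain ⟨r, hr⟩ := SlTwoTriple.exists_aeval_toEnd_h_eq_zero (K := ℂ) t lie_e_x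
  refine P.mem_weightGE.mpr fun a ha => ?_
  have repr_aeval := repr_aeval_of_apply_basis (T := ad ℂ L (P.tor fun i => n i)) (P.lie_tor _)
    (∏ i ∈ Finset.range r, (X - C (i : ℂ))) x a
  have product_eq_zero : ∏ i ∈ Finset.range r, (((weight n a : ℤ) : ℂ) - i) = 0 := by
    rw [ad, hr, map_zero, Finsupp.zero_apply, zero_eq_mul] at repr_aeval
    simpa [eval_prod, weight_intCast] using repr_aeval.resolve_right ha
  obtain ⟨i, -, hi⟩ := Finset.prod_eq_zero_iff.mp product_eq_zero
  have weight_eq : weight n a = i := by exact_mod_cast sub_eq_zero.mp hi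
  exact weight_eq ▸ i.cast_nonneg

lemma map_ad_weightGE_zero : (P.weightGE n 0).map (ad ℂ L e) = P.weightGE n 2 := by
  apply le_antisymm
  · rw [weightGE, Submodule.map_span_le]
    rintro _ ⟨a, ha, rfl⟩
    have lie_h := SlTwoTriple.lie_h_lie_e t (P.lie_tor _ a)
    rw [weight_intCast] at lie_h
    exact P.mem_weightGE_of_lie_eq_smul (z := weight n a + 2) (by simpa using lie_h)
      (Int.le_add_of_nonneg_left ha)
  · rw [weightGE, Submodule.span_le]
    rintro _ ⟨a, ha, rfl⟩
    have two_le_weight : 2 ≤ weight n a := ha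
    obtain ⟨x, hx, lie_e_x⟩ := SlTwoTriple.exists_lie_e_eq t (μ := ((weight n a : ℤ) : ℂ))
      (fun r hr => by
        have weight_eq : weight n a = -r := by exact_mod_cast hr
        omega)
      (by rw [lie_tor, weight_intCast])
    exact ⟨x, P.mem_weightGE_of_lie_eq_smul (z := weight n a - 2) (by simpa using hx)
      (sub_nonneg.mpr ha), lie_e_x⟩

lemma card_weight_zero_or_one : (Finset.univ.filter fun a => weight n a = 0 ∨ weight n a = 1).card =
    Module.finrank ℂ (centralizer L e) := by
  let adE := (ad ℂ L e).domRestrict (P.weightGE n 0)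
  have range_adE : LinearMap.range adE = P.weightGE n 2 := by
    rw [LinearMap.range_domRestrict, P.map_ad_weightGE_zero t]
  have ker_adE : LinearMap.ker adE =
      (centralizer L e).toSubmodule.comap (P.weightGE n 0).subtype := by
    ext x
    change ⁅e, (x : L)⁆ = 0 ↔ ⁅(x : L), e⁆ = 0
    rw [← lie_skew, neg_eq_zero]
  have finrank_ker : Module.finrank ℂ (LinearMap.ker adE) = Module.finrank ℂ (centralizer L e) :=
    ker_adE ▸ (Submodule.comapSubtypeEquivOfLe (P.centralizer_le_weightGE t)).finrank_eq
  have rank_nullity := LinearMap.finrank_range_add_finrank_ker adE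
  rw [range_adE, finrank_ker, finrank_weightGE, finrank_weightGE] at rank_nullity
  have card_add : (Finset.univ.filter fun a => 2 ≤ weight n a).card +
      (Finset.univ.filter fun a => weight n a = 0 ∨ weight n a = 1).card =
      (Finset.univ.filter fun a => 0 ≤ weight n a).card := by
    rw [← Finset.card_union_of_disjoint (Finset.disjoint_filter.mpr fun _ _ _ => by omega),
      ← Finset.filter_or]
    exact congrArg _ (Finset.filter_congr fun _ _ => by omega)
  omega

end Pinning

lemma card_weight_two_lt_six {n : Fin 6 → ℤ} (hn : ∀ i, n i = 1 ∨ n i = 2)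
    (card_zero_or_one : (Finset.univ.filter fun a => weight n a = 0 ∨ weight n a = 1).card = 8) :
    (Finset.univ.filter fun a => weight n a = 2).card < 6 := by
  let labels (s : Finset (Fin 6)) (i : Fin 6) : ℤ := if i ∈ s then 2 else 1
  have n_eq : n = labels (Finset.univ.filter (n · = 2)) := by
    funext i
    obtain hi | hi := hn i <;> simp [labels, hi]
  have card_labels_two_lt : ∀ s : Finset (Fin 6),
      (Finset.univ.filter fun a => weight (labels s) a = 0 ∨ weight (labels s) a = 1).card = 8 →
      (Finset.univ.filter fun a => weight (labels s) a = 2).card < 6 := by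
    decide +kernel
  rw [n_eq] at card_zero_or_one ⊢
  exact card_labels_two_lt _ card_zero_or_one

-- Besides the six coroots, the roots `±αᵢ` have weight zero, leaving no room for `αⱼ`.
lemma two_le_of_card_weight {n : Fin 6 → ℤ} (hn : 0 ≤ n)
    (card_zero_or_one : (Finset.univ.filter fun a => weight n a = 0 ∨ weight n a = 1).card = 8)
    {i j : Fin 6} (hi : n i = 0) (hij : j ≠ i) : 2 ≤ n j := by
  by_contra! hj
  have subset : insert (.pos (simpleRoot j)) (insert (.pos (simpleRoot i))
      (insert (.neg (simpleRoot i)) (Finset.univ.image Index.coroot))) ⊆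
      Finset.univ.filter fun a => weight n a = 0 ∨ weight n a = 1 := by
    intro a
    simp only [Finset.mem_insert, Finset.mem_image, Finset.mem_univ, true_and, Finset.mem_filter]
    rintro (rfl | rfl | rfl | ⟨l, rfl⟩)
    · have hn_j : 0 ≤ n j := hn j
      rw [weight_simpleRoot]
      omega
    · simp [weight_simpleRoot, hi]
    · simp [weight_neg_simpleRoot, hi]
    · simp [weight_coroot]
  have card_eq_nine : ∀ i j : Fin 6, j ≠ i → (insert (.pos (simpleRoot j))
      (insert (.pos (simpleRoot i)) (insert (.neg (simpleRoot i))
        (Finset.univ.image Index.coroot)))).card = 9 := by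
    decide +kernel
  have card_le := Finset.card_le_card subset
  rw [card_eq_nine i j hij, card_zero_or_one] at card_le
  omega

end E6

namespace E6

open LieAlgebra CartanMatrix

/-! ### The normal form of a subregular element -/

/-- The weighted Dynkin diagram with label `0` at the node `i` and label `2` at all other nodes. -/
def weightedDiagram (i j : Fin 6) : ℤ := if j = i then 0 else 2

lemma exists_isBracket_of_weight_weightedDiagram {i : Fin 6} {a : Index}
    (ha : weight (weightedDiagram i) a = 2) :
    ∃ j ≠ i, a = .pos (simpleRoot j) ∨ ∃ s : ℤˣ, Combination.IsBracket
      [(.pos (simpleRoot i), 1)] [(.pos (simpleRoot j), 1)] [(a, s)] := by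
  revert i a
  decide +kernel

namespace Pinning

variable {L : Type*} [LieRing L] [LieAlgebra ℂ L] (P : Pinning L) {e : L} {i j : Fin 6}

lemma lie_simple_lie_simple_simple (i j : Fin 6) :
    ⁅P.basis (.pos (simpleRoot i)),
      ⁅P.basis (.pos (simpleRoot i)), P.basis (.pos (simpleRoot j))⁆⁆ = 0 := by
  have exists_isBracket : ∀ i j, ∃ (s : SignType) (a : Index),
      Combination.IsBracket [(.pos (simpleRoot i), 1)] [(.pos (simpleRoot j), 1)] [(a, s)] ∧
      Combination.IsBracket [(.pos (simpleRoot i), 1)] [(a, s)] [] := by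
    decide +kernel
  obtain ⟨s, a, ha, ha'⟩ := exists_isBracket i j
  rw [P.lie_basis ha]
  simpa using P.lie_vec ha'

lemma lie_neg_simple_simple (hij : j ≠ i) :
    ⁅P.basis (.neg (simpleRoot i)), P.basis (.pos (simpleRoot j))⁆ = 0 :=
  (P.lie_basis (n := []) (by revert i j; decide +kernel)).trans P.vec_nil

lemma lie_simple_simple_of_cartan_eq_zero (hij : E₆ i j = 0) :
    ⁅P.basis (.pos (simpleRoot i)), P.basis (.pos (simpleRoot j))⁆ = 0 := by
  have isBracket (j : Fin 6) (hij : E₆ i j = 0) :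
      Combination.IsBracket [(.pos (simpleRoot i), 1)] [(.pos (simpleRoot j), 1)] [] := by
    revert j
    fin_cases i <;> decide +kernel
  rw [P.lie_basis (isBracket j hij), vec_nil]

lemma lie_neg_simple_lie_simple_simple (hij : j ≠ i) :
    ⁅P.basis (.neg (simpleRoot i)),
      ⁅P.basis (.pos (simpleRoot i)), P.basis (.pos (simpleRoot j))⁆⁆ =
      -(E₆ i j : ℂ) • P.basis (.pos (simpleRoot j)) := by
  rw [leibniz_lie, P.lie_neg_simple_simple hij, lie_zero, add_zero, ← lie_skew (P.basis (.neg _)),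
    (P.isSl2Triple i).lie_e_f, neg_lie, lie_coroot, weight_simpleRoot, neg_smul]

lemma lie_tor_lie_simple_simple (m : Fin 6 → ℂ) (i j : Fin 6) :
    ⁅P.tor m, ⁅P.basis (.pos (simpleRoot i)), P.basis (.pos (simpleRoot j))⁆⁆ =
      (m i + m j) • ⁅P.basis (.pos (simpleRoot i)), P.basis (.pos (simpleRoot j))⁆ := by
  rw [leibniz_lie, lie_tor, lie_tor, weight_simpleRoot, weight_simpleRoot, smul_lie, lie_smul,
    add_smul]

/-- The general element of degree `2` for the grading by `weightedDiagram i`, as a combination of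
the simple root vectors `eⱼ` and of the brackets `⁅eᵢ, eⱼ⁆` with `j ≠ i`. The values of the
coefficients at `i` are irrelevant. -/
noncomputable def degreeTwo (i : Fin 6) (c d : Fin 6 → ℂ) : L :=
  ∑ j ∈ Finset.univ.erase i, (c j • P.basis (.pos (simpleRoot j)) +
    d j • ⁅P.basis (.pos (simpleRoot i)), P.basis (.pos (simpleRoot j))⁆)

lemma degreeTwo_zero (i : Fin 6) : P.degreeTwo i 0 0 = 0 := by
  simp [degreeTwo]

lemma degreeTwo_add (i : Fin 6) (c d c' d' : Fin 6 → ℂ) :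
    P.degreeTwo i (c + c') (d + d') = P.degreeTwo i c d + P.degreeTwo i c' d' := by
  rw [degreeTwo, degreeTwo, degreeTwo, ← Finset.sum_add_distrib]
  refine Finset.sum_congr rfl fun j _ => ?_
  rw [Pi.add_apply, Pi.add_apply]
  module

lemma degreeTwo_single (hij : j ≠ i) (a b : ℂ) :
    P.degreeTwo i (Pi.single j a) (Pi.single j b) = a • P.basis (.pos (simpleRoot j)) +
      b • ⁅P.basis (.pos (simpleRoot i)), P.basis (.pos (simpleRoot j))⁆ := by
  rw [degreeTwo, Finset.sum_eq_single_of_mem j (by simpa using hij) fun k _ hk => by simp [hk]]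
  simp

@[simp] lemma map_degreeTwo (g : L ≃ₗ⁅ℂ⁆ L) (i : Fin 6) (c d : Fin 6 → ℂ) :
    (P.map g).degreeTwo i c d = g (P.degreeTwo i c d) := by
  simp [degreeTwo, LieEquiv.map_lie]

lemma lie_tor_degreeTwo {m c d : Fin 6 → ℂ} (hc : ∀ j ≠ i, c j = 0 ∨ m j = 0)
    (hd : ∀ j ≠ i, E₆ i j = 0 ∨ d j = 0 ∨ m i + m j = 0) :
    ⁅P.tor m, P.degreeTwo i c d⁆ = 0 := by
  rw [degreeTwo, lie_sum]
  refine Finset.sum_eq_zero fun j hj => ?_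
  have hji := Finset.ne_of_mem_erase hj
  have lie_simple : c j • m j • P.basis (.pos (simpleRoot j)) = 0 := by
    obtain h | h := hc j hji <;> simp [h]
  have lie_bracket : d j • (m i + m j) •
      ⁅P.basis (.pos (simpleRoot i)), P.basis (.pos (simpleRoot j))⁆ = 0 := by
    obtain h | h | h := hd j hji
    · rw [P.lie_simple_simple_of_cartan_eq_zero h, smul_zero, smul_zero]
    · rw [h, zero_smul]
    · rw [h, zero_smul, smul_zero]
  rw [lie_add, lie_smul, lie_smul, lie_tor, weight_simpleRoot, lie_tor_lie_simple_simple,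
    lie_simple, lie_bracket, add_zero]

lemma exists_degreeTwo_eq (he : ⁅P.tor (fun j => weightedDiagram i j), e⁆ = (2 : ℂ) • e) :
    ∃ c d, P.degreeTwo i c d = e := by
  rw [← P.basis.sum_repr e]
  refine Finset.sum_induction _ (fun y => ∃ c d, P.degreeTwo i c d = y) ?_
    ⟨0, 0, P.degreeTwo_zero i⟩ fun a _ => ?_
  · rintro _ _ ⟨c, d, rfl⟩ ⟨c', d', rfl⟩
    exact ⟨c + c', d + d', P.degreeTwo_add i c d c' d'⟩
  · by_cases ha : P.basis.repr e a = 0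
    · exact ⟨0, 0, by rw [degreeTwo_zero, ha, zero_smul]⟩
    · obtain ⟨j, hji, rfl | ⟨s, hs⟩⟩ := exists_isBracket_of_weight_weightedDiagram
        (P.weight_eq_of_repr_ne_zero (z := 2) (by simpa using he) ha)
      · exact ⟨Pi.single j (P.basis.repr e _), Pi.single j 0,
          by rw [degreeTwo_single P hji, zero_smul _ ⁅_, _⁆, add_zero]⟩
      · have sign_mul_sign : ((s : ℤ) : ℂ) * (s : ℤ) = 1 := by
          exact_mod_cast Int.units_coe_mul_self s
        refine ⟨Pi.single j 0, Pi.single j (P.basis.repr e a * (s : ℤ)), ?_⟩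
        rw [degreeTwo_single P hji, P.lie_basis hs, vec_cons, vec_nil, zero_smul, zero_add,
          add_zero, smul_smul, mul_assoc, sign_mul_sign, mul_one]

end Pinning

/-- The pair `(h, e)` has a normal form with coefficients `c` and `d` with respect to some pinning:
`h` is given by `weightedDiagram i` and `e` is the corresponding element of degree `2`. -/
def HasNormalForm {L : Type*} [LieRing L] [LieAlgebra ℂ L] (h e : L) (i : Fin 6)
    (c d : Fin 6 → ℂ) : Prop :=
  ∃ P : Pinning L, h = P.tor (fun j => weightedDiagram i j) ∧ e = P.degreeTwo i c d

namespace HasNormalForm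

variable {L : Type*} [LieRing L] [LieAlgebra ℂ L] {e h : L} {i j : Fin 6} {c d : Fin 6 → ℂ}

section Distinguished

variable (hN : HasNormalForm h e i c d) (hdist : IsDistinguished L e)

include hN hdist

lemma eq_zero {m : Fin 6 → ℂ} (hc : ∀ j ≠ i, c j = 0 ∨ m j = 0)
    (hd : ∀ j ≠ i, E₆ i j = 0 ∨ d j = 0 ∨ m i + m j = 0) : m = 0 := by
  obtain ⟨P, -, rfl⟩ := hN
  exact P.tor_injective <| (hdist _ (P.lie_tor_degreeTwo hc hd) (P.isSemisimple_ad_tor m)).trans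
    P.tor_zero.symm

lemma coeff_ne_zero (hji : j ≠ i) (hj : E₆ i j = 0 ∨ d j = 0) : c j ≠ 0 := by
  intro hc
  have single_eq_zero : (Pi.single j 1 : Fin 6 → ℂ) = 0 := by
    refine hN.eq_zero hdist (fun k _ => ?_) fun k _ => ?_ <;> obtain rfl | hkj := eq_or_ne k j
    · exact .inl hc
    · exact .inr (Pi.single_eq_of_ne hkj _)
    · exact hj.imp_right .inl
    · exact .inr (.inr (by simp [hkj, hji.symm]))
  simpa using congrFun single_eq_zero j

lemma exists_ne_zero : ∃ j ≠ i, E₆ i j ≠ 0 ∧ c j ≠ 0 ∧ d j ≠ 0 := by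
  by_contra! coeff_mul_eq_zero
  let m (j : Fin 6) : ℂ := if j = i then 1 else if E₆ i j = 0 ∨ d j = 0 then 0 else -1
  have m_eq_zero : m = 0 := by
    refine hN.eq_zero hdist (fun j hji => ?_) fun j hji => ?_ <;>
      by_cases hj : E₆ i j = 0 ∨ d j = 0
    · exact .inr (by simp [m, hji, hj])
    · rw [not_or] at hj
      exact .inl (by_contra fun hc => hj.2 (coeff_mul_eq_zero j hji hj.1 hc))
    · exact hj.imp_right .inl
    · exact .inr (.inr (by simp [m, hji, hj]))
  simpa [m] using congrFun m_eq_zero i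

end Distinguished

variable [FiniteDimensional ℂ L]

lemma add_smul (hN : HasNormalForm h e i c d) (s : ℂ) : HasNormalForm h e i c (d + s • c) := by
  obtain ⟨P, rfl, rfl⟩ := hN
  set g := expAd (s • P.basis (.pos (simpleRoot i)))
  have g_simple (j : Fin 6) : g (P.basis (.pos (simpleRoot j))) = P.basis (.pos (simpleRoot j)) +
      s • ⁅P.basis (.pos (simpleRoot i)), P.basis (.pos (simpleRoot j))⁆ :=
    expAd_of_lie_lie_eq_zero (by rw [smul_lie])
      (by rw [smul_lie, lie_smul, P.lie_simple_lie_simple_simple, smul_zero, smul_zero])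
  have g_bracket (j : Fin 6) : g ⁅P.basis (.pos (simpleRoot i)), P.basis (.pos (simpleRoot j))⁆ =
      ⁅P.basis (.pos (simpleRoot i)), P.basis (.pos (simpleRoot j))⁆ :=
    expAd_of_lie_eq_zero (by rw [smul_lie, P.lie_simple_lie_simple_simple, smul_zero])
  refine ⟨P.map g.symm, ?_, ?_⟩
  · rw [Pinning.map_tor, LieEquiv.eq_symm_apply]
    refine expAd_of_lie_eq_zero ?_
    rw [smul_lie, ← lie_skew, P.lie_tor, weight_simpleRoot]
    simp [weightedDiagram]
  · rw [Pinning.map_degreeTwo, LieEquiv.eq_symm_apply, Pinning.degreeTwo, Pinning.degreeTwo,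
      map_sum]
    refine Finset.sum_congr rfl fun j _ => ?_
    rw [map_add, map_smul, map_smul, g_simple, g_bracket, Pi.add_apply, Pi.smul_apply, smul_eq_mul]
    module

lemma sub_smul (hN : HasNormalForm h e i c d) (s : ℂ) :
    HasNormalForm h e i (fun j => c j - s * E₆ i j * d j) d := by
  obtain ⟨P, rfl, rfl⟩ := hN
  set g := expAd (s • P.basis (.neg (simpleRoot i)))
  have g_simple {j : Fin 6} (hj : j ≠ i) :
      g (P.basis (.pos (simpleRoot j))) = P.basis (.pos (simpleRoot j)) :=
    expAd_of_lie_eq_zero (by rw [smul_lie, P.lie_neg_simple_simple hj, smul_zero])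
  have g_bracket {j : Fin 6} (hj : j ≠ i) :
      g ⁅P.basis (.pos (simpleRoot i)), P.basis (.pos (simpleRoot j))⁆ =
        ⁅P.basis (.pos (simpleRoot i)), P.basis (.pos (simpleRoot j))⁆ +
          s • -(E₆ i j : ℂ) • P.basis (.pos (simpleRoot j)) :=
    expAd_of_lie_lie_eq_zero (by rw [smul_lie, P.lie_neg_simple_lie_simple_simple hj])
      (by rw [smul_lie, lie_smul, lie_smul, P.lie_neg_simple_simple hj]; simp)
  refine ⟨P.map g.symm, ?_, ?_⟩
  · rw [Pinning.map_tor, LieEquiv.eq_symm_apply]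
    refine expAd_of_lie_eq_zero ?_
    rw [smul_lie, ← lie_skew, P.lie_tor, weight_neg_simpleRoot]
    simp [weightedDiagram]
  · rw [Pinning.map_degreeTwo, LieEquiv.eq_symm_apply, Pinning.degreeTwo, Pinning.degreeTwo,
      map_sum]
    refine Finset.sum_congr rfl fun j hj => ?_
    have hji := Finset.ne_of_mem_erase hj
    rw [map_add, map_smul, map_smul, g_simple hji, g_bracket hji]
    module

lemma exists_right_eq_zero (hN : HasNormalForm h e i c d) (hij : E₆ i j ≠ 0) :
    ∃ c d, HasNormalForm h e i c d ∧ d j = 0 := by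
  have cartan_ne_zero : (E₆ i j : ℂ) ≠ 0 := Int.cast_ne_zero.mpr hij
  by_cases hc : c j = 0
  · refine ⟨_, _, (hN.sub_smul 1).add_smul (1 / E₆ i j), ?_⟩
    simp [hc, cartan_ne_zero]
  · exact ⟨_, _, hN.add_smul (-(d j / c j)), by simp [hc]⟩

lemma exists_left_eq_zero (hN : HasNormalForm h e i c d) (hij : E₆ i j ≠ 0) (hd : d j ≠ 0) :
    ∃ c, HasNormalForm h e i c d ∧ c j = 0 := by
  have cartan_ne_zero : (E₆ i j : ℂ) ≠ 0 := Int.cast_ne_zero.mpr hij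
  refine ⟨_, hN.sub_smul (c j / (E₆ i j * d j)), ?_⟩
  field_simp
  simp

-- Otherwise the coefficient `c j` could be removed, contradicting `exists_ne_zero`.
lemma exists_right_ne_zero (hN : HasNormalForm h e i c d) (hdist : IsDistinguished L e)
    (hij : E₆ i j ≠ 0) : ∃ k ≠ i, k ≠ j ∧ E₆ i k ≠ 0 ∧ d k ≠ 0 := by
  by_cases hd : d j = 0
  · obtain ⟨k, hki, hk, -, hdk⟩ := hN.exists_ne_zero hdist
    exact ⟨k, hki, by rintro rfl; exact hdk hd, hk, hdk⟩
  · obtain ⟨c, hN, hc⟩ := hN.exists_left_eq_zero hij hd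
    obtain ⟨k, hki, hk, hck, hdk⟩ := hN.exists_ne_zero hdist
    exact ⟨k, hki, by rintro rfl; exact hck hc, hk, hdk⟩

-- A node other than the branch node has at most two neighbours.
lemma eq_three (hN : HasNormalForm h e i c d) (hdist : IsDistinguished L e) : i = 3 := by
  by_contra hi
  have exists_neighbours (i : Fin 6) : i ≠ 3 → ∃ j k, E₆ i j ≠ 0 ∧ E₆ i k ≠ 0 ∧
      ∀ l ≠ i, E₆ i l ≠ 0 → l = j ∨ l = k := by
    fin_cases i <;> decide +kernel
  obtain ⟨j, k, hj, hk, eq_or_eq⟩ := exists_neighbours i hi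
  obtain ⟨c, d, hN, hd⟩ := hN.exists_right_eq_zero hj
  obtain ⟨l, hli, hlk, hl, hdl⟩ := hN.exists_right_ne_zero hdist hk
  obtain rfl := (eq_or_eq l hli hl).resolve_right hlk
  exact hdl hd

lemma exists_coeff_of_three (hN : HasNormalForm h e 3 c d) (hdist : IsDistinguished L e) :
    ∃ c d, HasNormalForm h e 3 c d ∧ d 1 = 0 ∧ c 2 = 0 ∧
      c 0 ≠ 0 ∧ c 1 ≠ 0 ∧ c 4 ≠ 0 ∧ c 5 ≠ 0 ∧ d 2 ≠ 0 ∧ d 4 ≠ 0 := by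
  have eq_of_cartan_ne_zero : ∀ j ≠ (3 : Fin 6), E₆ 3 j ≠ 0 → j = 1 ∨ j = 2 ∨ j = 4 := by decide
  obtain ⟨c, d, hN, hd1⟩ := hN.exists_right_eq_zero (j := 1) (by decide)
  have hd2 : d 2 ≠ 0 := by
    obtain ⟨k, hk3, hk4, hk, hdk⟩ := hN.exists_right_ne_zero hdist (j := 4) (by decide)
    obtain rfl | rfl | rfl := eq_of_cartan_ne_zero k hk3 hk
    exacts [absurd hd1 hdk, hdk, absurd rfl hk4]
  obtain ⟨c, hN, hc2⟩ := hN.exists_left_eq_zero (by decide) hd2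
  obtain ⟨hc4, hd4⟩ : c 4 ≠ 0 ∧ d 4 ≠ 0 := by
    obtain ⟨k, hk3, hk, hck, hdk⟩ := hN.exists_ne_zero hdist
    obtain rfl | rfl | rfl := eq_of_cartan_ne_zero k hk3 hk
    exacts [absurd hd1 hdk, absurd hc2 hck, ⟨hck, hdk⟩]
  exact ⟨c, d, hN, hd1, hc2, hN.coeff_ne_zero hdist (by decide) (.inl (by decide)),
    hN.coeff_ne_zero hdist (by decide) (.inr hd1), hc4,
    hN.coeff_ne_zero hdist (by decide) (.inl (by decide)), hd2, hd4⟩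

end HasNormalForm

/-- The positive roots supporting a representative of the subregular nilpotent orbit. -/
def subregularRoot : Fin 6 → Fin 36 := ![0, 1, 4, 5, 8, 9]

/-- A representative of the subregular nilpotent orbit. -/
def subregularList : Combination := List.ofFn fun i => (.pos (subregularRoot i), 1)

lemma exists_weight_subregularRoot_eq (v : Fin 6 → ℂ) :
    ∃ m, ∀ i, weight m (.pos (subregularRoot i)) = v i := by
  have root_eq : ∀ i, root (.pos (subregularRoot i)) =
      ![![1, 0, 0, 0, 0, 0], ![0, 1, 0, 0, 0, 0], ![0, 0, 0, 0, 1, 0], ![0, 0, 0, 0, 0, 1],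
        ![0, 0, 1, 1, 0, 0], ![0, 0, 0, 1, 1, 0]] i := by
    decide +kernel
  refine ⟨![v 0, v 1, v 4 - (v 5 - v 2), v 5 - v 2, v 2, v 3], fun i => ?_⟩
  rw [weight, root_eq]
  fin_cases i <;> simp [dotProduct, Fin.sum_univ_six]

namespace Pinning

variable {L : Type*} [LieRing L] [LieAlgebra ℂ L] (P : Pinning L)

lemma vec_subregularList : P.vec subregularList = ∑ i, P.basis (.pos (subregularRoot i)) := by
  rw [vec, subregularList, List.map_ofFn, List.sum_ofFn]
  simp

lemma degreeTwo_three {c d : Fin 6 → ℂ} (hc : c 2 = 0) (hd : d 1 = 0) : P.degreeTwo 3 c d =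
    ∑ i, ![c 0, c 1, c 4, c 5, d 2, -d 4] i • P.basis (.pos (subregularRoot i)) := by
  have lie_zero_eq := P.lie_simple_simple_of_cartan_eq_zero (i := 3) (j := 0) (by decide)
  have lie_five_eq := P.lie_simple_simple_of_cartan_eq_zero (i := 3) (j := 5) (by decide)
  have lie_two_eq : ⁅P.basis (.pos (simpleRoot 3)), P.basis (.pos (simpleRoot 2))⁆ =
      P.basis (.pos 8) := by
    simpa using P.lie_basis (n := [(.pos 8, 1)]) (by decide +kernel)
  have lie_four_eq : ⁅P.basis (.pos (simpleRoot 3)), P.basis (.pos (simpleRoot 4))⁆ =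
      -P.basis (.pos 9) := by
    simpa using P.lie_basis (n := [(.pos 9, -1)]) (by decide +kernel)
  have erase_eq : Finset.univ.erase (3 : Fin 6) = {0, 1, 2, 4, 5} := by decide
  have sum_erase (g : Fin 6 → L) : ∑ j ∈ Finset.univ.erase (3 : Fin 6), g j =
      g 0 + g 1 + g 2 + g 4 + g 5 := by
    simp only [erase_eq, Finset.sum_insert, Finset.sum_singleton, Finset.mem_insert,
      Finset.mem_singleton, Fin.reduceEq, or_self, not_false_eq_true, add_assoc]
  rw [degreeTwo, sum_erase, lie_zero_eq, lie_two_eq, lie_four_eq, lie_five_eq, hc, hd,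
    Fin.sum_univ_six]
  simp only [subregularRoot, Matrix.cons_val]
  have simpleRoot_zero : simpleRoot 0 = 0 := rfl
  have simpleRoot_one : simpleRoot 1 = 1 := rfl
  have simpleRoot_four : simpleRoot 4 = 4 := rfl
  have simpleRoot_five : simpleRoot 5 = 5 := rfl
  rw [simpleRoot_zero, simpleRoot_one, simpleRoot_four, simpleRoot_five]
  module

variable [FiniteDimensional ℂ L]

-- The six roots are linearly independent, so that the maximal torus rescales their root vectors
-- independently.
lemma exists_vec_subregularList_eq {a : Fin 6 → ℂ} (ha : ∀ i, a i ≠ 0) :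
    ∃ Q : Pinning L, Q.tor = P.tor ∧
      Q.vec subregularList = ∑ i, a i • P.basis (.pos (subregularRoot i)) := by
  obtain ⟨m, hm⟩ := exists_weight_subregularRoot_eq fun i => Complex.log (a i)
  refine ⟨P.map (expAd (P.tor m)), funext fun n => ?_, ?_⟩
  · rw [map_tor, expAd_of_lie_eq_zero (P.lie_tor_tor m n)]
  · rw [vec_subregularList]
    refine Finset.sum_congr rfl fun i _ => ?_
    rw [map_basis, expAd_of_lie_eq_smul (P.lie_tor m _), hm, Complex.exp_log (ha i)]

end Pinning

variable {L : Type*} [LieRing L] [LieAlgebra ℂ L] [FiniteDimensional ℂ L] {e h f : L}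

lemma HasNormalForm.exists_vec_eq {i : Fin 6} {c d : Fin 6 → ℂ} (hN : HasNormalForm h e i c d)
    (hdist : IsDistinguished L e) : ∃ P : Pinning L,
      h = P.tor (fun j => weightedDiagram 3 j) ∧ e = P.vec subregularList := by
  obtain rfl := hN.eq_three hdist
  obtain ⟨c, d, ⟨P, rfl, rfl⟩, hd1, hc2, hc0, hc1, hc4, hc5, hd2, hd4⟩ :=
    hN.exists_coeff_of_three hdist
  have coeff_ne_zero : ∀ i, ![c 0, c 1, c 4, c 5, d 2, -d 4] i ≠ 0 := by
    simp [Fin.forall_fin_succ, hc0, hc1, hc4, hc5, hd2, hd4]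
  obtain ⟨Q, tor_eq, vec_eq⟩ := P.exists_vec_subregularList_eq coeff_ne_zero
  exact ⟨Q, by rw [tor_eq], by rw [vec_eq, P.degreeTwo_three hc2 hd1]⟩

lemma Pinning.exists_subregular (P : Pinning L) (t : IsSl2Triple h e f)
    (hdist : IsDistinguished L e) (hdim : Module.finrank ℂ (centralizer L e) = 8) :
    ∃ P : Pinning L, h = P.tor (fun j => weightedDiagram 3 j) ∧ e = P.vec subregularList := by
  obtain ⟨P, n, rfl, n_nonneg⟩ := P.exists_nonneg_tor_eq t
  have lie_h_e : ⁅P.tor (fun i => n i), e⁆ = ((2 : ℤ) : ℂ) • e := by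
    rw [Int.cast_ofNat, t.lie_h_e_smul ℂ]
  have n_le (i : Fin 6) : n i ≤ 2 := P.le_of_isDistinguished hdist lie_h_e zero_le_two n_nonneg i
  have card_zero_or_one := (P.card_weight_zero_or_one t).trans hdim
  obtain ⟨i, hi⟩ : ∃ i, n i = 0 := by
    by_contra! n_ne_zero
    have card_two_lt := card_weight_two_lt_six (fun i => by
      have := n_nonneg i
      have := n_le i
      have := n_ne_zero i
      omega) card_zero_or_one
    exact card_two_lt.not_ge (P.six_le_card_of_isDistinguished hdist lie_h_e)
  have n_eq : n = weightedDiagram i := by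
    funext j
    obtain rfl | hji := eq_or_ne j i
    · simpa [weightedDiagram] using hi
    · simpa [weightedDiagram, hji] using
        (n_le j).antisymm (two_le_of_card_weight n_nonneg card_zero_or_one hi hji)
  subst n_eq
  obtain ⟨c, d, rfl⟩ := P.exists_degreeTwo_eq (t.lie_h_e_smul ℂ)
  exact HasNormalForm.exists_vec_eq ⟨P, rfl, rfl⟩ hdist

end E6

namespace E6

open CartanMatrix
open scoped Matrix

/-! ### The centralizer of a subregular element -/

/-- A basis of the centralizer of the subregular nilpotent element; the first five elements span
its centre. -/
def centralizerList : Fin 8 → Combination := ![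
  subregularList,
  [(.pos 22, -1), (.pos 24, -1), (.pos 25, 1), (.pos 27, 1)],
  [(.pos 26, -1), (.pos 28, -1), (.pos 29, 2), (.pos 30, 1)],
  [(.pos 33, 1)],
  [(.pos 35, 1)],
  [(.pos 6, -2), (.pos 10, -1), (.pos 11, 1), (.pos 12, 1), (.pos 13, 1), (.pos 14, -1),
    (.pos 15, 1)],
  [(.pos 16, -2), (.pos 17, 1), (.pos 18, -1), (.pos 19, -2), (.pos 20, 1), (.pos 23, 2)],
  [(.pos 26, 1), (.pos 28, 1), (.pos 30, 1)]]

/-- A basis of the centre of the centralizer of the subregular nilpotent element. -/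
def centerList (i : Fin 5) : Combination := centralizerList (i.castAdd 3)

/-- The eigenvalues of the neutral element of the subregular triple on `centerList`. -/
def centerWeight : Fin 5 → ℤ := ![2, 8, 10, 14, 16]

/-- The nilnegative element of the subregular triple. -/
def negList : Combination :=
  [(.neg 0, 12), (.neg 1, 16), (.neg 2, 14), (.neg 4, 14), (.neg 5, 12), (.neg 7, 8), (.neg 8, 22),
    (.neg 9, 8)]

/-- The index of an element `x` of `centralizerList` such that `⁅⁅f, x⁆, z⁆` is a nonzero multiple
of the highest root vector, where `f` is given by `negList` and `z` by `centerList i`. -/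
def partner : Fin 5 → Fin 8 := ![4, 2, 1, 5, 0]

/-- The multiple of the highest root vector attained with `partner`. -/
def partnerCoeff : Fin 5 → ℤ := ![-16, 40, 40, -28, -16]

/-- The brackets `⁅f, x⁆` with `f` given by `negList` and `x` the element chosen by `partner`. -/
def partnerList : Fin 5 → Combination := ![
  [(.pos 33, -8), (.pos 34, 16)],
  [(.pos 21, 10), (.pos 24, 20), (.pos 25, 10), (.pos 27, -10)],
  [(.pos 16, -8), (.pos 17, -4), (.pos 18, -12), (.pos 19, 8), (.pos 20, 4)],
  [(.pos 0, -6), (.pos 1, -14), (.pos 2, 8), (.pos 4, 2), (.pos 5, 6), (.pos 7, 28), (.pos 8, -10),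
    (.pos 9, 10)],
  [(.coroot 0, -12), (.coroot 1, -16), (.coroot 2, -22), (.coroot 3, -30), (.coroot 4, -22),
    (.coroot 5, -12)]]

/-- The coefficient of a basis element in a formal combination. -/
def Combination.coeff (l : Combination) (a : Index) : ℤ :=
  (l.map fun t => if t.1 = a then t.2 else 0).sum

lemma isBracket_centerList_centralizerList (i : Fin 5) (j : Fin 8) :
    (centerList i).IsBracket (centralizerList j) [] := by
  revert i j
  decide +kernel

lemma isBracket_negList_partner (i : Fin 5) :
    negList.IsBracket (centralizerList (partner i)) (partnerList i) := by
  revert i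
  decide +kernel

lemma isBracket_partnerList_centerList (i : Fin 5) :
    (partnerList i).IsBracket (centerList i) [(.pos 35, partnerCoeff i)] := by
  revert i
  decide +kernel

lemma isBracket_partnerList_centerList_of_lt {i j : Fin 5} (hij : i < j) :
    (partnerList i).IsBracket (centerList j) [] := by
  have isBracket (i j : Fin 5) : i < j → (partnerList i).IsBracket (centerList j) [] := by
    revert i j
    decide +kernel
  exact isBracket i j hij

lemma weight_centerList (i : Fin 5) :
    ∀ t ∈ centerList i, weight (weightedDiagram 3) t.1 = centerWeight i := by
  revert i
  decide +kernel

namespace Pinning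

variable {L : Type*} [LieRing L] [LieAlgebra ℂ L] (P : Pinning L)

lemma repr_vec (l : Combination) (a : Index) : P.basis.repr (P.vec l) a = l.coeff a := by
  induction l with
  | nil => simp [Combination.coeff]
  | cons t l ih =>
    rw [vec_cons, map_add, map_smul, Finsupp.add_apply, Finsupp.smul_apply, ih,
      Module.Basis.repr_self, Finsupp.single_apply]
    simp [Combination.coeff, apply_ite (Int.cast : ℤ → ℂ)]

lemma repr_sum_smul_vec {ι : Type*} [Fintype ι] (g : ι → ℂ) (l : ι → Combination) (a : Index) :
    P.basis.repr (∑ i, g i • P.vec (l i)) a = ∑ i, g i * (l i).coeff a := by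
  simp [repr_vec, Finsupp.finsetSum_apply]

lemma lie_tor_vec {n : Fin 6 → ℤ} {c : ℤ} {l : Combination} (hl : ∀ t ∈ l, weight n t.1 = c) :
    ⁅P.tor (fun i => n i), P.vec l⁆ = (c : ℂ) • P.vec l := by
  induction l with
  | nil => simp
  | cons t l ih =>
    rw [vec_cons, lie_add, lie_smul, lie_tor, weight_intCast, hl t (by simp),
      ih fun s hs => hl s (by simp [hs])]
    module

lemma tor_weightedDiagram_three : P.tor (fun j => weightedDiagram 3 j) =
    P.vec [(.coroot 0, 12), (.coroot 1, 16), (.coroot 2, 22), (.coroot 3, 30), (.coroot 4, 22),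
      (.coroot 5, 12)] := by
  have weightedDiagram_eq : weightedDiagram 3 = ![12, 16, 22, 30, 22, 12] ᵥ* E₆ := by
    decide +kernel
  have weightedDiagram_cast : (fun j => (weightedDiagram 3 j : ℂ)) =
      (fun j => ((![12, 16, 22, 30, 22, 12] : Fin 6 → ℤ) j : ℂ)) ᵥ* E₆.map Int.cast := by
    rw [weightedDiagram_eq]
    exact funext (RingHom.map_vecMul (Int.castRingHom ℂ) E₆ _)
  rw [weightedDiagram_cast, tor_vecMul, Fin.sum_univ_six]
  simp [add_assoc]

lemma lie_subregularList_negList :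
    ⁅P.vec subregularList, P.vec negList⁆ = P.tor (fun j => weightedDiagram 3 j) := by
  rw [tor_weightedDiagram_three]
  exact P.lie_vec (by decide +kernel)

lemma f_eq_vec [FiniteDimensional ℂ L] {f : L}
    (t : IsSl2Triple (P.tor fun j => weightedDiagram 3 j) (P.vec subregularList) f) :
    f = P.vec negList := by
  refine (SlTwoTriple.eq_f_of_lie_eq ℂ t P.lie_subregularList_negList ?_).symm
  rw [P.lie_tor_vec (c := -2) (by decide +kernel)]
  simp

lemma lie_tor_centerList (i : Fin 5) :
    ⁅P.tor (fun j => weightedDiagram 3 j), P.vec (centerList i)⁆ =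
      (centerWeight i : ℂ) • P.vec (centerList i) :=
  P.lie_tor_vec (weight_centerList i)

lemma lie_centerList_centralizerList (i : Fin 5) (j : Fin 8) :
    ⁅P.vec (centerList i), P.vec (centralizerList j)⁆ = 0 :=
  P.lie_vec (isBracket_centerList_centralizerList i j)

lemma lie_centralizerList_subregularList (j : Fin 8) :
    ⁅P.vec (centralizerList j), P.vec subregularList⁆ = 0 := by
  rw [← lie_skew]
  exact neg_eq_zero.mpr (P.lie_centerList_centralizerList 0 j)

-- The coordinates at eight suitable roots form a triangular matrix with nonzero diagonal.
lemma linearIndependent_centralizerList :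
    LinearIndependent ℂ fun i => P.vec (centralizerList i) := by
  obtain ⟨coordinate, diagonal, diagonal_ne_zero, coeff_eq⟩ :
      ∃ (coordinate : Fin 8 → Index) (diagonal : Fin 8 → ℤ), (∀ j, diagonal j ≠ 0) ∧
        ∀ i j, (centralizerList i).coeff (coordinate j) =
          if i = j then diagonal j else if i = 2 ∧ j = 7 then 1 else 0 :=
    ⟨fun j => .pos (![0, 27, 29, 33, 35, 6, 16, 30] j), ![1, 1, 2, 1, 1, -2, -2, 1],
      by decide, by decide +kernel⟩
  rw [Fintype.linearIndependent_iff]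
  intro g hg
  have sum_eq_zero (a : Index) : ∑ i, g i * ((centralizerList i).coeff a : ℂ) = 0 := by
    rw [← P.repr_sum_smul_vec, hg, map_zero, Finsupp.zero_apply]
  have eq_zero_of_ne {j : Fin 8} (hj : j ≠ 7) : g j = 0 := by
    simpa [coeff_eq, hj, diagonal_ne_zero] using sum_eq_zero (coordinate j)
  intro j
  obtain rfl | hj := eq_or_ne j 7
  · simpa [Fin.sum_univ_eight, eq_zero_of_ne, coeff_eq, diagonal_ne_zero] using
      sum_eq_zero (coordinate 7)
  · exact eq_zero_of_ne hj

lemma linearIndependent_centerList : LinearIndependent ℂ fun i => P.vec (centerList i) :=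
  P.linearIndependent_centralizerList.comp _ (Fin.castAdd_injective 5 3)

lemma eq_centerWeight_of_lie_tor_eq_smul {a : Fin 5 → ℂ} {m : ℂ}
    (h : ⁅P.tor (fun j => weightedDiagram 3 j), ∑ i, a i • P.vec (centerList i)⁆ =
      m • ∑ i, a i • P.vec (centerList i)) {i : Fin 5} (hi : a i ≠ 0) : m = centerWeight i := by
  have sum_eq_zero : ∑ i, (a i * (centerWeight i - m)) • P.vec (centerList i) = 0 := by
    rw [lie_sum, Finset.smul_sum, ← sub_eq_zero, ← Finset.sum_sub_distrib] at h
    rw [← h]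
    refine Finset.sum_congr rfl fun i _ => ?_
    rw [lie_smul, lie_tor_centerList]
    module
  have mul_eq_zero_i := Fintype.linearIndependent_iff.mp P.linearIndependent_centerList _
    sum_eq_zero i
  exact (sub_eq_zero.mp ((mul_eq_zero.mp mul_eq_zero_i).resolve_left hi)).symm

lemma exists_eq_smul_of_lie_tor_eq_smul {z : L}
    (hz : ∃ a : Fin 5 → ℂ, z = ∑ i, a i • P.vec (centerList i)) {i : Fin 5}
    (h : ⁅P.tor (fun j => weightedDiagram 3 j), z⁆ = (centerWeight i : ℂ) • z) :
    ∃ b : ℂ, z = b • P.vec (centerList i) := by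
  obtain ⟨a, rfl⟩ := hz
  have centerWeight_injective : Function.Injective centerWeight := by decide
  refine ⟨a i, Finset.sum_eq_single_of_mem i (Finset.mem_univ i) fun k _ hki => ?_⟩
  have a_eq_zero : a k = 0 := by
    by_contra hak
    have weight_eq := P.eq_centerWeight_of_lie_tor_eq_smul h hak
    exact hki (centerWeight_injective (by exact_mod_cast weight_eq)).symm
  rw [a_eq_zero, zero_smul]

-- The bracket matrix of the elements chosen by `partner` with `centerList` is triangular.
lemma lie_partnerList_sum {a : Fin 5 → ℂ} {j : Fin 5} (ha : ∀ i < j, a i = 0) :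
    ⁅P.vec (partnerList j), ∑ i, a i • P.vec (centerList i)⁆ =
      (a j * partnerCoeff j) • P.vec (centerList 4) := by
  have highest_eq : P.vec (centerList 4) = P.basis (.pos 35) := by
    simp [centerList, centralizerList]
  rw [lie_sum, Finset.sum_eq_single_of_mem j (Finset.mem_univ j) fun i _ hij => ?_]
  · rw [lie_smul, P.lie_vec (isBracket_partnerList_centerList j), vec_cons, vec_nil, add_zero,
      smul_smul, highest_eq]
  · obtain hlt | hgt := lt_or_gt_of_ne hij
    · rw [ha i hlt, zero_smul, lie_zero]
    · rw [lie_smul, P.lie_vec (isBracket_partnerList_centerList_of_lt hgt), vec_nil, smul_zero]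

lemma exists_lie_lie_eq_smul {v : L} (hv : ∃ a : Fin 5 → ℂ, v = ∑ i, a i • P.vec (centerList i))
    (hv0 : v ≠ 0) (b : ℂ) :
    ∃ x : L, ⁅x, P.vec subregularList⁆ = 0 ∧
      ⁅⁅P.vec negList, x⁆, v⁆ = b • P.vec (centerList 4) := by
  obtain ⟨a, rfl⟩ := hv
  obtain ⟨i, -, hi⟩ := Finset.exists_ne_zero_of_sum_ne_zero hv0
  obtain ⟨j, hj, a_eq_zero⟩ := WellFounded.has_min (wellFounded_lt (α := Fin 5)) {i | a i ≠ 0}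
    ⟨i, left_ne_zero_of_smul hi⟩
  have partnerCoeff_ne_zero : ∀ j, partnerCoeff j ≠ 0 := by decide
  have coeff_ne_zero : a j * partnerCoeff j ≠ 0 :=
    mul_ne_zero hj (Int.cast_ne_zero.mpr (partnerCoeff_ne_zero j))
  refine ⟨(b / (a j * partnerCoeff j)) • P.vec (centralizerList (partner j)), ?_, ?_⟩
  · rw [smul_lie, lie_centralizerList_subregularList, smul_zero]
  · rw [lie_smul, P.lie_vec (isBracket_negList_partner j), smul_lie,
      P.lie_partnerList_sum fun i hij => by_contra fun h => a_eq_zero i h hij, smul_smul,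
      div_mul_cancel₀ _ coeff_ne_zero]

section Centralizer

variable [FiniteDimensional ℂ L]
  (hdim : Module.finrank ℂ (centralizer L (P.vec subregularList)) = 8) {x : L}

include hdim

lemma exists_eq_sum_centralizerList (hx : ⁅x, P.vec subregularList⁆ = 0) :
    ∃ g : Fin 8 → ℂ, x = ∑ i, g i • P.vec (centralizerList i) := by
  have span_eq : Submodule.span ℂ (Set.range fun i => P.vec (centralizerList i)) =
      (centralizer L (P.vec subregularList)).toSubmodule := by
    refine Submodule.eq_of_le_of_finrank_eq (Submodule.span_le.mpr ?_) ?_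
    · rintro _ ⟨i, rfl⟩
      exact P.lie_centralizerList_subregularList i
    · rw [finrank_span_eq_card P.linearIndependent_centralizerList, Fintype.card_fin]
      exact hdim.symm
  have mem_span : x ∈ Submodule.span ℂ (Set.range fun i => P.vec (centralizerList i)) :=
    span_eq ▸ hx
  obtain ⟨g, hg⟩ := (Submodule.mem_span_range_iff_exists_fun ℂ).mp mem_span
  exact ⟨g, hg.symm⟩

lemma inCenter_centerList (i : Fin 5) :
    InCenterOfCentralizer L (P.vec subregularList) (P.vec (centerList i)) := by
  refine ⟨P.lie_centralizerList_subregularList _, fun y hy => ?_⟩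
  obtain ⟨g, rfl⟩ := P.exists_eq_sum_centralizerList hdim hy
  rw [lie_sum]
  exact Finset.sum_eq_zero fun j _ => by rw [lie_smul, lie_centerList_centralizerList, smul_zero]

-- Brackets with the elements `5` and `6` of `centralizerList` detect the last three coordinates.
lemma exists_eq_sum_centerList (hx : InCenterOfCentralizer L (P.vec subregularList) x) :
    ∃ a : Fin 5 → ℂ, x = ∑ i, a i • P.vec (centerList i) := by
  obtain ⟨g, rfl⟩ := P.exists_eq_sum_centralizerList hdim hx.1
  have sum_eq : ∑ i, g i • P.vec (centralizerList i) =
      ∑ i, g (Fin.castAdd 3 i) • P.vec (centerList i) +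
        ∑ i : Fin 3, g (Fin.natAdd 5 i) • P.vec (centralizerList (Fin.natAdd 5 i)) :=
    Fin.sum_univ_add (a := 5) (b := 3) fun i => g i • P.vec (centralizerList i)
  have sum_coeff_eq_zero (j : Fin 8) (l : Fin 3 → Combination)
      (hl : ∀ i, (centralizerList j).IsBracket (centralizerList (Fin.natAdd 5 i)) (l i))
      (a : Index) : ∑ i, g (Fin.natAdd 5 i) * ((l i).coeff a : ℂ) = 0 := by
    have lie_eq_zero : ⁅P.vec (centralizerList j), ∑ i, g i • P.vec (centralizerList i)⁆ = 0 := by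
      rw [← lie_skew, hx.2 _ (P.lie_centralizerList_subregularList j), neg_zero]
    have lie_centerList (i : Fin 5) : ⁅P.vec (centralizerList j), P.vec (centerList i)⁆ = 0 := by
      rw [← lie_skew, lie_centerList_centralizerList, neg_zero]
    simp_rw [sum_eq, lie_add, lie_sum, lie_smul, lie_centerList, P.lie_vec (hl _), smul_zero,
      Finset.sum_const_zero, zero_add] at lie_eq_zero
    rw [← P.repr_sum_smul_vec, lie_eq_zero, map_zero, Finsupp.zero_apply]
  have sum_five := sum_coeff_eq_zero 5
    ![[], [(.pos 26, 6), (.pos 28, 6), (.pos 30, 6)], [(.pos 33, 4)]] (by decide +kernel)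
  have sum_six := sum_coeff_eq_zero 6
    ![[(.pos 26, -6), (.pos 28, -6), (.pos 30, -6)], [], [(.pos 35, 6)]] (by decide +kernel)
  have g_five : g 5 = 0 := by
    simpa [Fin.sum_univ_three, Combination.coeff] using sum_six (.pos 30)
  have g_six : g 6 = 0 := by
    simpa [Fin.sum_univ_three, Combination.coeff] using sum_five (.pos 30)
  have g_seven : g 7 = 0 := by
    simpa [Fin.sum_univ_three, Combination.coeff] using sum_five (.pos 33)
  refine ⟨fun i => g (Fin.castAdd 3 i), ?_⟩
  rw [sum_eq, Fin.sum_univ_three]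
  simp [g_five, g_six, g_seven]

lemma finrank_zCenter : Module.finrank ℂ (zCenter L (P.vec subregularList)) = 5 := by
  have zCenter_eq : zCenter L (P.vec subregularList) =
      Submodule.span ℂ (Set.range fun i => P.vec (centerList i)) := by
    refine le_antisymm (fun x hx => ?_) (Submodule.span_le.mpr ?_)
    · obtain ⟨a, rfl⟩ := P.exists_eq_sum_centerList hdim hx
      exact (Submodule.mem_span_range_iff_exists_fun ℂ).mpr ⟨a, rfl⟩
    · rintro _ ⟨i, rfl⟩
      exact P.inCenter_centerList hdim i
  rw [zCenter_eq, finrank_span_eq_card P.linearIndependent_centerList, Fintype.card_fin]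

lemma exists_eigenvector_iff (m : ℂ) :
    (∃ z : L, z ≠ 0 ∧ InCenterOfCentralizer L (P.vec subregularList) z ∧
      ⁅P.tor (fun j => weightedDiagram 3 j), z⁆ = m • z) ↔ ∃ i, m = centerWeight i := by
  constructor
  · rintro ⟨z, hz, hcenter, hm⟩
    obtain ⟨a, rfl⟩ := P.exists_eq_sum_centerList hdim hcenter
    obtain ⟨i, -, hi⟩ := Finset.exists_ne_zero_of_sum_ne_zero hz
    exact ⟨i, P.eq_centerWeight_of_lie_tor_eq_smul hm (left_ne_zero_of_smul hi)⟩
  · rintro ⟨i, rfl⟩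
    exact ⟨_, P.linearIndependent_centerList.ne_zero i, P.inCenter_centerList hdim i,
      P.lie_tor_centerList i⟩

lemma propertyP : PropertyP L (P.vec subregularList) (P.tor fun j => weightedDiagram 3 j)
    (P.vec negList) := by
  intro m hm hmax v hv hv0 z hz hzm
  obtain ⟨i, rfl⟩ := (P.exists_eigenvector_iff hdim m).mp hm
  obtain rfl : i = 4 := by
    have le_max := hmax _ ((P.exists_eigenvector_iff hdim _).mpr ⟨4, rfl⟩)
    have eq_of_le : ∀ i, centerWeight 4 ≤ centerWeight i → i = 4 := by decide
    exact eq_of_le i (by simpa using (Complex.le_def.mp le_max).1)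
  obtain ⟨b, rfl⟩ :=
    P.exists_eq_smul_of_lie_tor_eq_smul (P.exists_eq_sum_centerList hdim hz) hzm
  exact P.exists_lie_lie_eq_smul (P.exists_eq_sum_centerList hdim hv) hv0 b

end Centralizer

end Pinning

end E6

/-- For the subregular distinguished nilpotent orbit of `E₆`
(`dim 𝔤^e = 8`): `dim 𝔷(𝔤^e) = 5`, the eigenvalues of `ad h` on `𝔷(𝔤^e)` are
`2, 8, 10, 14, 16`, and `e` satisfies property (P). -/
theorem e6_subregular_propertyP
    (L : Type*) [LieRing L] [LieAlgebra ℂ L] [FiniteDimensional ℂ L]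
    [LieAlgebra.IsSimple ℂ L] (htype : Nonempty (L ≃ₗ⁅ℂ⁆ LieAlgebra.e₆ ℂ))
    (e h f : L) (ht : IsSl2Triple h e f) (he : IsNilpotent (LieAlgebra.ad ℂ L e))
    (hdist : IsDistinguished L e)
    (hdim : Module.finrank ℂ ↥(centralizer L e) = 8) :
    Module.finrank ℂ ↥(zCenter L e) = 5 ∧
    (∀ m : ℂ, (∃ z : L, z ≠ 0 ∧ InCenterOfCentralizer L e z ∧ ⁅h, z⁆ = m • z) ↔
      m ∈ ({2, 8, 10, 14, 16} : Set ℂ)) ∧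
    PropertyP L e h f := by
  obtain ⟨P₀⟩ := E6.nonempty_pinning htype.some
  obtain ⟨P, rfl, rfl⟩ := P₀.exists_subregular ht hdist hdim
  obtain rfl := P.f_eq_vec ht
  refine ⟨P.finrank_zCenter hdim, fun m => ?_, P.propertyP hdim⟩
  rw [P.exists_eigenvector_iff hdim]
  simp [Fin.exists_fin_succ, E6.centerWeight]
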